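/- For every η > 0 there exist κ > 0 and a constant C = C(η) such that the following holds. For every prime p, every non-trivial multiplicative character χ modulo p, and all real numbers U, V with p^{1/4 + η} < U, V ≤ p, one has |∑_{1 ≤ u ≤ U} ∑_{1 ≤ v ≤ V} τ(u)·τ(v)·χ(u − v)| ≤ C·U·V·p^{−κ}, where τ(n) denotes the number of positive divisors of n. -/

import Mathlib

open Finset


section Stepanov
open Polynomial

theorem stp_dvd {F : Type} [Field F] (f : F[X]) (N : ℕ) :
    ∀ b, f ^ (N - b) ∣ hasseDeriv b (f ^ N) := by
  induction N with
  | zero => intro b; simp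
  | succ N ih =>
    intro b
    rw [pow_succ f N, hasseDeriv_mul]
    apply Finset.dvd_sum
    rintro ⟨i, j⟩ hij
    rw [HasAntidiagonal.mem_antidiagonal] at hij
    simp only at hij ⊢
    rcases Nat.eq_zero_or_pos j with h | h
    · subst h
      have hi : i = b := by omega
      subst hi
      rw [hasseDeriv_zero']
      refine dvd_trans (pow_dvd_pow f (show N + 1 - i ≤ (N - i) + 1 by omega)) ?_
      rw [pow_succ]
      exact mul_dvd_mul_right (ih i) f
    · exact Dvd.dvd.mul_right ((pow_dvd_pow f (by omega)).trans (ih i)) _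

theorem stp_G {F : Type} [Field F] (f : F[X]) (hf : f ≠ 0) (N b : ℕ) :
    ∃ G : F[X], hasseDeriv b (f ^ N) = f ^ (N - b) * G ∧ G.natDegree ≤ b * f.natDegree := by
  obtain ⟨G, hG⟩ := stp_dvd f N b
  refine ⟨G, hG, ?_⟩
  by_cases h0 : G = 0
  · simp [h0]
  have h1 := natDegree_hasseDeriv_le (f ^ N) b
  rw [hG, natDegree_mul (pow_ne_zero _ hf) h0, natDegree_pow, natDegree_pow] at h1
  rcases le_total b N with h | h
  · have : N * f.natDegree = (N - b) * f.natDegree + b * f.natDegree := by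
      rw [← add_mul]; congr 1; omega
    omega
  · have : N * f.natDegree ≤ b * f.natDegree := Nat.mul_le_mul_right _ h
    omega

/-- quotient operator -/
theorem stp_Q {F : Type} [Field F] (f : F[X]) (hf : f ≠ 0) (N l : ℕ) (hl : l ≤ N) :
    ∃ Q : F[X] →ₗ[F] F[X], ∀ k : F[X], hasseDeriv l (k * f ^ N) = f ^ (N - l) * Q k ∧
      (Q k).natDegree ≤ k.natDegree + l * f.natDegree := by
  choose G hG hGd using fun b => stp_G f hf N b
  refine ⟨∑ ab ∈ antidiagonal l, (LinearMap.mulRight F (f ^ (l - ab.2) * G ab.2)) ∘ₗ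
    (hasseDeriv ab.1), fun k => ⟨?_, ?_⟩⟩
  · rw [hasseDeriv_mul, LinearMap.sum_apply, mul_sum]
    refine sum_congr rfl fun ab hab => ?_
    rw [HasAntidiagonal.mem_antidiagonal] at hab
    simp only [LinearMap.comp_apply, LinearMap.mulRight_apply]
    rw [hG, show N - ab.2 = (N - l) + (l - ab.2) by omega, pow_add]
    ring
  · rw [LinearMap.sum_apply]
    refine natDegree_sum_le_of_forall_le _ _ fun ab hab => ?_
    rw [HasAntidiagonal.mem_antidiagonal] at hab
    simp only [LinearMap.comp_apply, LinearMap.mulRight_apply]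
    refine natDegree_mul_le.trans ?_
    have h1 := natDegree_hasseDeriv_le k ab.1
    have h2 : (f ^ (l - ab.2) * G ab.2).natDegree ≤ (l - ab.2) * f.natDegree + ab.2 * f.natDegree :=
      natDegree_mul_le.trans (add_le_add (natDegree_pow_le) (hGd _))
    rw [← add_mul, show l - ab.2 + ab.2 = l by omega] at h2
    omega

theorem stp_nonvanish {F : Type} [Field F] (g : F[X]) (hg : g.eval 0 ≠ 0)
    (d J K e q M : ℕ) (hd : 0 < d) (hq : q = d * e + 1) (hK : K + J ≤ e)
    (k : ℕ → F[X]) (hk : ∀ n, (k n).degree < K)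
    (hz : ∑ n ∈ range (d * J), k n * (X * g) ^ (M + (n % d) * e) * X ^ (q * (n / d)) = 0) :
    ∀ n < d * J, k n = 0 := by
  intro n
  induction n using Nat.strong_induction_on with
  | _ n ih =>
  intro hn
  have hexp : ∀ n, M + (n % d) * e + q * (n / d) = M + n * e + n / d := by
    intro n
    have := Nat.mod_add_div n d
    calc M + (n % d) * e + q * (n / d) = M + (n % d + d * (n / d)) * e + n / d := by rw [hq]; ring
      _ = _ := by rw [this]
  have hterm : ∀ n, k n * (X * g) ^ (M + (n % d) * e) * X ^ (q * (n / d)) =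
      X ^ (M + n * e + n / d) * (k n * g ^ (M + (n % d) * e)) := by
    intro n; rw [← hexp n, mul_pow, pow_add X _ (q * (n / d))]; ring
  have hj : n / d < J := Nat.div_lt_of_lt_mul hn
  have hdiv : (X : F[X]) ^ (M + (n + 1) * e) ∣ X ^ (M + n * e + n / d) * (k n * g ^ (M + (n % d) * e)) := by
    rw [← hterm n]
    rw [← add_sum_erase _ _ (mem_range.2 hn)] at hz
    rw [eq_neg_of_add_eq_zero_left hz, dvd_neg]
    refine Finset.dvd_sum fun n' hn' => ?_
    rw [mem_erase, mem_range] at hn'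
    rcases lt_or_gt_of_ne hn'.1 with h | h
    · rw [ih n' h hn'.2]; simp
    · rw [hterm]
      refine Dvd.dvd.mul_right (pow_dvd_pow _ ?_) _
      have : (n + 1) * e ≤ n' * e := Nat.mul_le_mul_right _ h
      exact (Nat.add_le_add_left this M).trans (Nat.le_add_right _ _)
  rw [show M + (n + 1) * e = (M + n * e + n / d) + (e - n / d) by
    have : (n + 1) * e = n * e + e := by ring
    omega, pow_add, mul_dvd_mul_iff_left (pow_ne_zero _ X_ne_zero)] at hdiv
  have hcop : IsCoprime ((X : F[X]) ^ (e - n / d)) (g ^ (M + (n % d) * e)) := by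
    apply IsCoprime.pow
    rw [Irreducible.coprime_iff_not_dvd irreducible_X, X_dvd_iff, coeff_zero_eq_eval_zero]
    exact hg
  have h2 := hcop.dvd_of_dvd_mul_right hdiv
  refine eq_zero_of_dvd_of_degree_lt h2 ?_
  rw [degree_X_pow]
  refine (hk n).trans_le ?_
  exact_mod_cast (by omega : K ≤ e - n / d)

theorem stp_main {F : Type} [Field F] [Fintype F] [DecidableEq F] (p r : ℕ) [Fact p.Prime] [CharP F p]
    (g f : F[X]) (hg : g.eval 0 ≠ 0) (hfg : f = X * g)
    (d J K e q M m : ℕ) (hd : 0 < d) (hq : q = d * e + 1) (hqp : q = p ^ r) (hqF : Fintype.card F = q)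
    (hK : K + J ≤ e) (hM : M ≤ q) (hm : f.natDegree ≤ m) (hJ : 0 < J) (hKp : 0 < K)
    (hcount : M * (K + M * m + J) < d * J * K) (c : F) (hc : c ≠ 0) :
    M * #{x : F | (f.eval x) ^ e = c} ≤ K + (M + d * e) * m + J * q := by
  have hg0 : g ≠ 0 := by rintro rfl; simp at hg
  have hf0 : f ≠ 0 := by rw [hfg]; exact mul_ne_zero X_ne_zero hg0
  have hQ : ∀ n : ℕ, ∀ l : Fin M, ∃ Q : F[X] →ₗ[F] F[X], ∀ k : F[X],
      hasseDeriv l (k * f ^ (M + (n % d) * e)) = f ^ (M + (n % d) * e - l) * Q k ∧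
      (Q k).natDegree ≤ k.natDegree + l * f.natDegree := fun n l =>
    stp_Q f hf0 _ _ (by have := l.2; omega)
  choose Q hQ1 hQ2 using hQ
  let D := K + M * m + J
  let P : (Fin K → F) →ₗ[F] F[X] := ∑ s : Fin K, (monomial (s : ℕ)) ∘ₗ (LinearMap.proj s)
  have hPdeg : ∀ a, (P a).degree < K := by
    intro a
    simp only [P, LinearMap.sum_apply, LinearMap.comp_apply, LinearMap.proj_apply]
    refine (degree_sum_le _ _).trans_lt ?_
    rw [Finset.sup_lt_iff (by exact_mod_cast WithBot.bot_lt_coe K)]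
    intro s _
    refine (degree_monomial_le _ _).trans_lt ?_
    exact_mod_cast s.2
  have hPinj : ∀ a, P a = 0 → a = 0 := by
    intro a ha
    funext s
    have := congrArg (fun u => coeff u s) ha
    simp only [P, LinearMap.sum_apply, LinearMap.comp_apply, LinearMap.proj_apply, finsetSum_coeff,
      coeff_monomial, coeff_zero, Fin.val_inj, Finset.sum_ite_eq', mem_univ, if_true] at this
    exact this
  let R : Fin M → (Fin (d * J) → Fin K → F) →ₗ[F] F[X] := fun l =>
    ∑ n : Fin (d * J), (LinearMap.mulLeft F (X ^ ((n : ℕ) / d) * C (c ^ ((n : ℕ) % d)))) ∘ₗ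
      (Q n l) ∘ₗ P ∘ₗ (LinearMap.proj n)
  have hRdeg : ∀ l a, (R l a).natDegree < D := by
    intro l a
    suffices (R l a).natDegree ≤ D - 1 by
      have : 0 < D := by simp only [D]; omega
      omega
    simp only [R, LinearMap.sum_apply]
    refine natDegree_sum_le_of_forall_le _ _ fun n _ => ?_
    simp only [LinearMap.comp_apply, LinearMap.mulLeft_apply, LinearMap.proj_apply]
    refine natDegree_mul_le.trans ?_
    have h1 : (X ^ ((n : ℕ) / d) * C (c ^ ((n : ℕ) % d))).natDegree ≤ (n : ℕ) / d :=
      natDegree_mul_C_le _ _ |>.trans (natDegree_X_pow_le _)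
    have h2 := hQ2 n l (P (a n))
    have h3 : (P (a n)).natDegree < K := by
      by_cases h : P (a n) = 0
      · rw [h]; simpa using hKp
      · exact (natDegree_lt_iff_degree_lt h).2 (hPdeg _)
    have h4 : (n : ℕ) / d < J := Nat.div_lt_of_lt_mul n.2
    have h5 : (l : ℕ) * f.natDegree ≤ M * m := Nat.mul_le_mul l.2.le hm
    simp only [D]
    omega
  let T : (Fin (d * J) → Fin K → F) →ₗ[F] (Fin M → Fin D → F) :=
    LinearMap.pi fun l => LinearMap.pi fun t => (lcoeff F (t : ℕ)) ∘ₗ (R l)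
  have hker : LinearMap.ker T ≠ ⊥ := by
    apply LinearMap.ker_ne_bot_of_finrank_lt
    simp only [Module.finrank_pi_fintype, Module.finrank_self, sum_const, card_univ, Fintype.card_fin, smul_eq_mul, mul_one]
    exact hcount
  obtain ⟨a, haT, ha0⟩ := (Submodule.ne_bot_iff _).1 hker
  have hR0 : ∀ l, R l a = 0 := by
    intro l
    ext t
    rw [coeff_zero]
    by_cases ht : t < D
    · have := congrFun (congrFun (LinearMap.mem_ker.1 haT) l) ⟨t, ht⟩
      simpa [T] using this
    · exact coeff_eq_zero_of_natDegree_lt ((hRdeg l a).trans_le (not_lt.1 ht))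
  let k : ℕ → F[X] := fun n => if h : n < d * J then P (a ⟨n, h⟩) else 0
  have hk : ∀ n : Fin (d * J), k n = P (a n) := by intro n; simp [k]
  have hkdeg : ∀ n, (k n).degree < K := by
    intro n
    simp only [k]
    split_ifs
    · exact hPdeg _
    · simp
  set Φ : F[X] := ∑ n ∈ range (d * J), k n * f ^ (M + (n % d) * e) * X ^ (q * (n / d)) with hΦ
  have hΦ0 : Φ ≠ 0 := by
    intro hz
    apply ha0
    funext n
    have := stp_nonvanish g hg d J K e q M hd hq hK k hkdeg (by rw [← hz, hΦ, hfg]) n n.2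
    rw [hk] at this
    exact hPinj _ this
  have hΦdeg : Φ.natDegree ≤ K + (M + d * e) * m + J * q := by
    refine natDegree_sum_le_of_forall_le _ _ fun n hn => ?_
    rw [mem_range] at hn
    have h4 : (n : ℕ) / d < J := Nat.div_lt_of_lt_mul hn
    refine natDegree_mul_le.trans ?_
    refine add_le_add (natDegree_mul_le.trans (add_le_add ?_ ?_)) ?_
    · exact natDegree_le_iff_degree_le.2 (hkdeg n).le
    · refine natDegree_pow_le.trans (Nat.mul_le_mul ?_ hm)
      gcongr
      exact (Nat.mod_lt _ hd).le
    · rw [natDegree_X_pow, mul_comm]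
      exact Nat.mul_le_mul_right _ h4.le
  have hvan : ∀ x : F, (f.eval x) ^ e = c → (X - C x) ^ M ∣ Φ := by
    intro x hx
    have hxq : x ^ q = x := by rw [← hqF]; exact FiniteField.pow_card x
    have hX : X ^ M ∣ taylor x Φ := by
      rw [X_pow_dvd_iff]
      intro l hl
      have hterm : ∀ n ∈ range (d * J), (taylor x (k n * f ^ (M + (n % d) * e) * X ^ (q * (n / d)))).coeff l
          = (f.eval x) ^ (M - l) * eval x (X ^ (n / d) * C (c ^ (n % d)) * Q n ⟨l, hl⟩ (k n)) := by
        intro n _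
        rw [taylor_mul, taylor_X_pow, pow_mul, hqp, add_pow_expChar_pow, ← C_pow, ← hqp, hxq]
        obtain ⟨s, hs⟩ : (X : F[X]) ^ q ∣ (X ^ q + C x) ^ (n / d) - (C x) ^ (n / d) := by
          have := sub_dvd_pow_sub_pow (X ^ q + C x) (C x : F[X]) (n / d)
          simpa using this
        rw [eq_add_of_sub_eq hs, mul_add, coeff_add, ← C_pow, coeff_mul_C, taylor_coeff, mul_left_comm,
          coeff_X_pow_mul', if_neg (by omega), zero_add]
        have := (hQ1 n ⟨l, hl⟩ (k n))
        simp only at this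
        rw [this, show M + n % d * e - l = (M - l) + e * (n % d) by rw [mul_comm e]; omega]
        simp only [eval_mul, eval_pow, eval_X, eval_C]
        rw [pow_add, pow_mul, hx]
        ring
      rw [hΦ, map_sum, finsetSum_coeff, sum_congr rfl hterm, ← mul_sum, ← eval_finsetSum]
      have := hR0 ⟨l, hl⟩
      have h2 : ∑ n ∈ range (d * J), (X ^ (n / d) * C (c ^ (n % d)) * Q n ⟨l, hl⟩ (k n)) = 0 := by
        rw [← this, Finset.sum_range]
        simp only [R, LinearMap.sum_apply, LinearMap.comp_apply, LinearMap.mulLeft_apply, LinearMap.proj_apply, hk]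
      rw [h2]; simp
    obtain ⟨s, hs⟩ := hX
    refine ⟨taylor (-x) s, ?_⟩
    apply taylor_injective x
    rw [hs, taylor_mul, taylor_pow, taylor_taylor]
    simp
  have hprod : ∏ x ∈ ({x : F | (f.eval x) ^ e = c} : Finset F), (X - C x) ^ M ∣ Φ := by
    apply Finset.prod_dvd_of_coprime
    · intro x _ y _ hxy
      exact (pairwise_coprime_X_sub_C Function.injective_id hxy).pow
    · intro x hx
      exact hvan x (mem_filter.1 hx).2
  have := natDegree_le_of_dvd hprod hΦ0
  rw [natDegree_prod_of_monic _ _ (fun x _ => (monic_X_sub_C x).pow M)] at this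
  simp only [natDegree_pow, natDegree_X_sub_C, mul_one, sum_const, smul_eq_mul] at this
  rw [mul_comm]
  exact this.trans hΦdeg

set_option maxHeartbeats 1000000 in
theorem stp_bound (d m : ℕ) (hd : 0 < d) : ∃ A : ℕ, ∀ (F : Type) [Field F] [Fintype F] [DecidableEq F]
    (p r : ℕ) [Fact p.Prime] [CharP F p] (g f : F[X]) (_ : g.eval 0 ≠ 0) (_ : f = X * g)
    (e q : ℕ) (_ : q = d * e + 1) (_ : q = p ^ r) (_ : Fintype.card F = q) (_ : f.natDegree ≤ m)
    (c : F) (_ : c ≠ 0),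
    d * #{x : F | (f.eval x) ^ e = c} ≤ q + A * Nat.sqrt q := by
  obtain ⟨t, ht⟩ : ∃ t, t = 2 * d ^ 2 * (d * m + 1) * 2 + 1 := ⟨_, rfl⟩
  refine ⟨4 * (t + 1 + 2 * m) + 4 * d * (t + 4 * d + 4), ?_⟩
  intro F _ _ _ p r _ _ g f hg hfg e q hq hqp hqF hm c hc
  obtain ⟨s, hs⟩ : ∃ s, s = Nat.sqrt q := ⟨_, rfl⟩
  have hs1 : s * s ≤ q := by rw [hs]; exact Nat.sqrt_le q
  have hs2 : q < (s + 1) * (s + 1) := by rw [hs]; exact Nat.lt_succ_sqrt q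
  have hspos : 1 ≤ s := by
    by_contra h
    have : s = 0 := by omega
    subst this
    have : e = 0 := by nlinarith
    subst this
    have : 1 < Fintype.card F := Fintype.one_lt_card
    omega
  have hq4 : q ≤ 4 * (s * s) := by nlinarith
  obtain ⟨Z, hZ⟩ : ∃ Z, Z = #{x : F | (f.eval x) ^ e = c} := ⟨_, rfl⟩
  have hZq : Z ≤ q := by rw [hZ, ← hqF]; exact card_le_univ _
  rw [← hZ, ← hs]
  by_cases hbig : s < t + 4 * d + 4
  · have h1 : d * Z ≤ d * q := Nat.mul_le_mul_left _ hZq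
    have h2 : d * q ≤ d * (4 * (s * s)) := Nat.mul_le_mul_left _ hq4
    have h3 : d * (4 * (s * s)) ≤ 4 * d * (t + 4 * d + 4) * s := by
      calc d * (4 * (s * s)) = 4 * d * s * s := by ring
        _ ≤ 4 * d * (t + 4 * d + 4) * s := by gcongr
    nlinarith
  push Not at hbig
  have hse : s ≤ e := by
    by_contra h
    push Not at h
    have : d * e ≤ d * s := Nat.mul_le_mul_left _ h.le
    nlinarith
  obtain ⟨K, hK⟩ : ∃ K, e = K + s := ⟨e - s, by omega⟩
  obtain ⟨M, hM⟩ : ∃ M, d * s = M + t := ⟨d * s - t, by nlinarith [Nat.sub_add_cancel (show t ≤ d * s by nlinarith)]⟩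
  -- 2 d K ≥ q/ something
  have hKbig : s * s ≤ 2 * d * K := by
    have h1 : d * e = d * K + d * s := by rw [hK]; ring
    have h2 : (4 * d + 4) * s ≤ s * s := Nat.mul_le_mul_right _ (by omega)
    have h3 : (4 * d + 4) * s = 4 * (d * s) + 4 * s := by ring
    have h4 : 2 * d * K = 2 * (d * K) := by ring
    rw [h4]
    omega
  have hKpos : 0 < K := by
    rcases Nat.eq_zero_or_pos K with h | h
    · subst h; nlinarith
    · exact h
  have hMds : M ≤ d * s := by omega
  have hMq : M ≤ q := by nlinarith
  have hcount : M * (K + M * m + s) < d * s * K := by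
    have h1 : M * (M * m + s) ≤ (d * s) * ((d * s) * m + s) := by gcongr
    have h2 : (d * s) * ((d * s) * m + s) = d * (d * m + 1) * (s * s) := by ring
    have h3 : d * (d * m + 1) * (s * s) ≤ d * (d * m + 1) * (2 * d * K) := Nat.mul_le_mul_left _ hKbig
    have h4 : d * (d * m + 1) * (2 * d * K) < t * K := by
      rw [show d * (d * m + 1) * (2 * d * K) = (2 * d ^ 2 * (d * m + 1)) * K by ring]
      apply Nat.mul_lt_mul_of_pos_right _ hKpos
      omega
    rw [hM]
    nlinarith
  have := stp_main p r g f hg hfg d s K e q M m hd hq hqp hqF (by omega) hMq hm (by omega) hKpos hcount c hc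
  rw [← hZ] at this
  -- s d Z ≤ t Z + ...
  have h1 : d * s * Z ≤ t * Z + (K + (M + d * e) * m + s * q) := by rw [hM]; nlinarith
  have h2 : t * Z ≤ t * q := Nat.mul_le_mul_left _ hZq
  have h3 : K ≤ q := by nlinarith
  have h4 : (M + d * e) * m ≤ (2 * q) * m := by
    apply Nat.mul_le_mul_right; omega
  have h5 : s * (d * Z) ≤ s * (q + 4 * (t + 1 + 2 * m) * s) := by
    have h6 : (t + 1 + 2 * m) * q ≤ (t + 1 + 2 * m) * (4 * (s * s)) := Nat.mul_le_mul_left _ hq4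
    nlinarith
  have h6 := Nat.le_of_mul_le_mul_left h5 hspos
  nlinarith [Nat.zero_le (4 * d * (t + 4 * d + 4) * s)]

end Stepanov


section PowerSums

theorem psum_radius {N : ℕ} (w : Fin N → ℂ) (C R : ℝ) (hR : 0 < R)
    (h : ∀ n : ℕ, 1 ≤ n → ‖∑ i, w i ^ n‖ ≤ C * R ^ n) : ∀ i, ‖w i‖ ≤ R := by
  intro i0
  by_contra hlt
  push Not at hlt
  -- unit vectors
  let z : ℕ → (Fin N → ℂ) := fun n i => (w i / ‖w i‖) ^ n
  have hz : ∀ n, z n ∈ Metric.closedBall (0 : Fin N → ℂ) 1 := by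
    intro n
    rw [mem_closedBall_zero_iff, pi_norm_le_iff_of_nonneg zero_le_one]
    intro i
    simp only [z, norm_pow, norm_div, Complex.norm_real, norm_norm]
    exact pow_le_one₀ (by positivity) (div_self_le_one _)
  obtain ⟨a, -, φ, hφ, hlim⟩ := (isCompact_closedBall (0 : Fin N → ℂ) 1).tendsto_subseq hz
  have hC := hlim.cauchySeq
  rw [Metric.cauchySeq_iff'] at hC
  obtain ⟨k0, hk0⟩ := hC (1 / 2) (by norm_num)
  have key : ∀ k > k0, R ^ (φ k - φ k0) * C ≥ ‖w i0‖ ^ (φ k - φ k0) / 2 := by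
    intro k hk
    set n := φ k - φ k0 with hn
    have hlt' : φ k0 < φ k := hφ hk
    have hn1 : 1 ≤ n := by omega
    have hre : ∀ i, ‖w i‖ ^ n / 2 ≤ (w i ^ n).re := by
      intro i
      by_cases hw : w i = 0
      · simp [hw, show n ≠ 0 by omega]
      have hw' : 0 < ‖w i‖ := norm_pos_iff.2 hw
      have h1 := hk0 k hk.le
      rw [dist_eq_norm] at h1
      have h2 := (norm_le_pi_norm _ i).trans_lt h1
      simp only [Function.comp_apply, Pi.sub_apply, z] at h2
      rw [show φ k = φ k0 + n by omega, pow_add] at h2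
      set u := w i / (‖w i‖ : ℂ) with hu
      have hun : ‖u‖ = 1 := by
        rw [hu, norm_div, Complex.norm_real, norm_norm, div_self hw'.ne']
      rw [show u ^ φ k0 * u ^ n - u ^ φ k0 = u ^ φ k0 * (u ^ n - 1) by ring, norm_mul, norm_pow, hun,
        one_pow, one_mul] at h2
      have h3 : (1 : ℝ) / 2 ≤ (u ^ n).re := by
        have := Complex.abs_re_le_norm (u ^ n - 1)
        rw [Complex.sub_re, Complex.one_re] at this
        have := (abs_le.1 (this.trans h2.le)).1
        linarith
      have h4 : w i ^ n = ((‖w i‖ ^ n : ℝ) : ℂ) * u ^ n := by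
        rw [hu, div_pow]
        push_cast
        have hne : ((‖w i‖ : ℂ)) ^ n ≠ 0 := pow_ne_zero _ (by exact_mod_cast hw'.ne')
        rw [mul_div_cancel₀ _ hne]
      rw [h4, Complex.re_ofReal_mul]
      have : 0 < ‖w i‖ ^ n := pow_pos hw' n
      nlinarith
    have h1 := h n hn1
    have h2 : ‖w i0‖ ^ n / 2 ≤ (∑ i, w i ^ n).re := by
      rw [Complex.re_sum]
      refine (hre i0).trans ?_
      refine Finset.single_le_sum (f := fun i => (w i ^ n).re) (fun i _ => ?_) (mem_univ i0)
      exact le_trans (by positivity) (hre i)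
    have h3 := Complex.re_le_norm (∑ i, w i ^ n)
    linarith
  have hgt : 1 < ‖w i0‖ / R := (one_lt_div hR).2 hlt
  obtain ⟨n, hn⟩ := pow_unbounded_of_one_lt (2 * C) hgt
  have hk := key (k0 + 1 + n) (by omega)
  have hge : n ≤ φ (k0 + 1 + n) - φ k0 := by
    have : φ k0 + (1 + n) ≤ φ (k0 + (1 + n)) := by
      have := hφ.add_le_nat (1 + n) k0
      rw [add_comm (1+n) k0] at this
      omega
    rw [← add_assoc] at this
    rw [← add_assoc] at this
    omega
  set M := φ (k0 + 1 + n) - φ k0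
  have h1 : (‖w i0‖ / R) ^ n ≤ (‖w i0‖ / R) ^ M := pow_le_pow_right₀ hgt.le hge
  rw [div_pow (‖w i0‖) R M, ] at h1
  have hRM : 0 < R ^ M := pow_pos hR M
  have h2 : 2 * C < ‖w i0‖ ^ M / R ^ M := hn.trans_le h1
  rw [lt_div_iff₀ hRM] at h2
  linarith

theorem newton_seq (a S : ℕ → ℂ) (N : ℕ) (ha0 : a 0 = 1) (haN : ∀ n, N < n → a n = 0)
    (hrec : ∀ n : ℕ, (n : ℂ) * a n = ∑ j ∈ Icc 1 n, S j * a (n - j)) :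
    ∃ w : Fin N → ℂ, ∀ n, 1 ≤ n → S n = - ∑ i, w i ^ n := by
  classical
  let P : Polynomial ℂ := ∑ i ∈ range (N + 1), Polynomial.C (a i) * Polynomial.X ^ (N - i)
  have hcoeff : ∀ k ≤ N, P.coeff k = a (N - k) := by
    intro k hk
    simp only [P, Polynomial.finsetSum_coeff, Polynomial.coeff_C_mul_X_pow]
    rw [Finset.sum_eq_single (N - k)]
    · rw [if_pos (by omega)]
    · intro b hb hne
      rw [mem_range] at hb
      rw [if_neg (by omega)]
    · intro h; exact absurd (mem_range.2 (by omega)) h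
  have hdeg : P.natDegree ≤ N := by
    refine Polynomial.natDegree_sum_le_of_forall_le _ _ fun i _ => ?_
    exact (Polynomial.natDegree_C_mul_X_pow_le _ _).trans (by omega)
  have hdeg' : P.natDegree = N := by
    refine le_antisymm hdeg (Polynomial.le_natDegree_of_ne_zero ?_)
    rw [hcoeff N le_rfl]; simp [ha0]
  have hlead : P.leadingCoeff = 1 := by
    rw [Polynomial.leadingCoeff, hdeg', hcoeff N le_rfl]; simp [ha0]
  have hspl := IsAlgClosed.splits P
  have hcard : P.roots.card = N := by rw [← hdeg']; exact (Polynomial.splits_iff_card_roots.1 hspl)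
  obtain ⟨w, hw⟩ : ∃ w : Fin N → ℂ, univ.val.map w = P.roots := by
    refine ⟨fun i => P.roots.toList.get (i.cast (by simp [hcard])), ?_⟩
    have : P.roots = (P.roots.toList : Multiset ℂ) := by simp
    conv_rhs => rw [this]
    rw [Fin.univ_val_map]
    congr 1
    apply List.ext_get
    · simp [hcard]
    · intro n h1 h2; simp
  have hes : ∀ n, (-1) ^ n * (MvPolynomial.aeval w (MvPolynomial.esymm (Fin N) ℂ n)) = a n := by
    intro n
    rw [MvPolynomial.aeval_esymm_eq_multiset_esymm, hw]
    rcases le_or_gt n N with h | h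
    · have := Polynomial.coeff_eq_esymm_roots_of_card (p := P) (by rw [hcard, hdeg']) (k := N - n) (by omega)
      rw [hcoeff _ (by omega), hlead, hdeg', show N - (N - n) = n by omega, one_mul] at this
      exact this.symm
    · rw [haN n h, Multiset.esymm, Multiset.powersetCard_eq_empty _ (by omega)]
      simp
  refine ⟨w, fun n => ?_⟩
  induction n using Nat.strong_induction_on with
  | _ n ih =>
  intro hn
  have h1 := congrArg (MvPolynomial.aeval w) (MvPolynomial.mul_esymm_eq_sum (Fin N) ℂ n)
  simp only [map_mul, map_sum, map_natCast, map_pow, map_neg, map_one] at h1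
  have h2 : (n : ℂ) * a n = - ∑ j ∈ Icc 1 n, (∑ i, w i ^ j) * a (n - j) := by
    rw [← hes n, mul_left_comm, h1, ← mul_assoc, pow_succ, ← mul_assoc, ← pow_add, ← two_mul,
      pow_mul]
    simp only [neg_one_sq, one_pow, one_mul, neg_mul]
    congr 1
    refine Finset.sum_bij' (fun x _ => x.2) (fun j _ => (n - j, j)) ?_ ?_ ?_ ?_ ?_
    · intro x hx
      simp only [mem_filter, HasAntidiagonal.mem_antidiagonal] at hx
      rw [mem_Icc]; omega
    · intro j hj
      rw [mem_Icc] at hj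
      simp only [mem_filter, HasAntidiagonal.mem_antidiagonal]; omega
    · intro x hx
      simp only [mem_filter, HasAntidiagonal.mem_antidiagonal] at hx
      ext <;> simp; omega
    · intro j hj; rfl
    · intro x hx
      simp only [mem_filter, HasAntidiagonal.mem_antidiagonal] at hx
      rw [hes, show n - x.2 = x.1 by omega, mul_comm]
      simp [MvPolynomial.psum]
  have hmem : n ∈ Icc 1 n := mem_Icc.2 ⟨hn, le_rfl⟩
  rw [hrec n, ← Finset.sum_neg_distrib, ← Finset.add_sum_erase _ _ hmem,
    ← Finset.add_sum_erase _ _ hmem] at h2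
  have h3 : ∑ j ∈ (Icc 1 n).erase n, S j * a (n - j) =
      ∑ j ∈ (Icc 1 n).erase n, -((∑ i, w i ^ j) * a (n - j)) := by
    refine Finset.sum_congr rfl fun j hj => ?_
    rw [mem_erase, mem_Icc] at hj
    rw [ih j (by omega) (by omega), neg_mul]
  rw [h3, add_left_inj] at h2
  simpa [ha0] using h2

end PowerSums


section LFun
open Polynomial

variable {F : Type} [Field F] [Fintype F]

theorem monics_finite (n : ℕ) : {g : F[X] | g.Monic ∧ g.natDegree = n}.Finite := by
  apply Set.Finite.subset (Set.finite_range
    (fun c : Fin (n + 1) → F => ∑ i : Fin (n + 1), C (c i) * X ^ (i : ℕ)))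
  rintro g ⟨_, hn⟩
  refine ⟨fun i => g.coeff i, ?_⟩
  show (∑ i : Fin (n + 1), C (g.coeff (i : ℕ)) * X ^ (i : ℕ)) = g
  rw [Fin.sum_univ_eq_sum_range (fun i => C (g.coeff i) * X ^ i) (n + 1), ← hn]
  exact (g.as_sum_range_C_mul_X_pow).symm

noncomputable def monics (F : Type) [Field F] [Fintype F] (n : ℕ) : Finset F[X] :=
  (monics_finite (F := F) n).toFinset

theorem mem_monics {n : ℕ} {g : F[X]} : g ∈ monics F n ↔ g.Monic ∧ g.natDegree = n := by
  simp [monics]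

open Classical in
noncomputable def irrs (F : Type) [Field F] [Fintype F] (n : ℕ) : Finset F[X] :=
  ((Icc 1 n).biUnion (fun j => monics F j)).filter Irreducible

theorem mem_irrs {n : ℕ} {P : F[X]} :
    P ∈ irrs F n ↔ P.Monic ∧ Irreducible P ∧ P.natDegree ≤ n := by
  classical
  simp only [irrs, mem_filter, mem_biUnion, mem_Icc, mem_monics]
  constructor
  · rintro ⟨⟨j, hj, h1, h2⟩, h3⟩
    exact ⟨h1, h3, by omega⟩
  · rintro ⟨h1, h2, h3⟩
    exact ⟨⟨P.natDegree, ⟨h2.natDegree_pos, h3⟩, h1, rfl⟩, h2⟩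

noncomputable def asum (L : F[X] →* ℂ) (n : ℕ) : ℂ := ∑ g ∈ monics F n, L g

noncomputable def Ssum (L : F[X] →* ℂ) (j : ℕ) : ℂ :=
  ∑ P ∈ irrs F j, if P.natDegree ∣ j then (P.natDegree : ℂ) * L P ^ (j / P.natDegree) else 0

open Classical in
theorem degree_count {n : ℕ} {g : F[X]} (hg : g ∈ monics F n) :
    n = ∑ P ∈ irrs F n, P.natDegree * #{k ∈ Icc 1 n | P ^ k ∣ g} := by
  obtain ⟨hm, hn⟩ := mem_monics.1 hg
  have hg0 := hm.ne_zero
  have h1 : (UniqueFactorizationMonoid.normalizedFactors g).prod = g := by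
    rw [UniqueFactorizationMonoid.prod_normalizedFactors_eq hg0, hm.normalize_eq_self]
  have h2 : ∀ P ∈ irrs F n, #{k ∈ Icc 1 n | P ^ k ∣ g} =
      (UniqueFactorizationMonoid.normalizedFactors g).count P := by
    intro P hP
    obtain ⟨hPm, hPi, hPd⟩ := mem_irrs.1 hP
    have h3 := UniqueFactorizationMonoid.emultiplicity_eq_count_normalizedFactors hPi hg0
    rw [hPm.normalize_eq_self] at h3
    set t := (UniqueFactorizationMonoid.normalizedFactors g).count P
    have h4 : ∀ k : ℕ, P ^ k ∣ g ↔ k ≤ t := by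
      intro k
      rw [pow_dvd_iff_le_emultiplicity, h3]
      exact_mod_cast Iff.rfl
    have ht : t ≤ n := by
      have := natDegree_le_of_dvd ((h4 t).2 le_rfl) hg0
      rw [natDegree_pow, hn] at this
      have := hPi.natDegree_pos
      nlinarith
    have : ({k ∈ Icc 1 n | P ^ k ∣ g} : Finset ℕ) = Icc 1 t := by
      ext k
      simp only [mem_filter, mem_Icc, h4]
      omega
    rw [this]; simp
  rw [sum_congr rfl fun P hP => by rw [h2 P hP]]
  have h5 : g.natDegree = ((UniqueFactorizationMonoid.normalizedFactors g).map natDegree).sum := by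
    conv_lhs => rw [← h1]
    apply natDegree_multiset_prod
    exact UniqueFactorizationMonoid.zero_notMem_normalizedFactors g
  have h6 : n = ∑ P ∈ (UniqueFactorizationMonoid.normalizedFactors g).toFinset,
      (UniqueFactorizationMonoid.normalizedFactors g).count P * P.natDegree := by
    rw [← hn, h5, Finset.sum_multiset_map_count]; simp
  refine h6.trans ?_
  symm
  rw [← Finset.sum_subset (s₁ := (UniqueFactorizationMonoid.normalizedFactors g).toFinset)]
  · refine sum_congr rfl fun P _ => by ring
  · intro P hP
    rw [Multiset.mem_toFinset] at hP
    have hi := UniqueFactorizationMonoid.irreducible_of_normalized_factor P hP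
    have hd := UniqueFactorizationMonoid.dvd_of_mem_normalizedFactors hP
    have hnor := UniqueFactorizationMonoid.normalize_normalized_factor P hP
    refine mem_irrs.2 ⟨?_, hi, ?_⟩
    · rw [← hnor]; exact monic_normalize hi.ne_zero
    · rw [← hn]; exact natDegree_le_of_dvd hd hg0
  · intro P _ hP
    rw [Multiset.mem_toFinset] at hP
    rw [Multiset.count_eq_zero_of_notMem hP, mul_zero]

open Classical in
theorem sum_dvd (L : F[X] →* ℂ) {n k : ℕ} {P : F[X]} (hP : P.Monic) :
    ∑ g ∈ monics F n with P ^ k ∣ g, L g =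
      if k * P.natDegree ≤ n then L P ^ k * asum L (n - k * P.natDegree) else 0 := by
  have hPk : (P ^ k).Monic := hP.pow k
  have hdeg : (P ^ k).natDegree = k * P.natDegree := hP.natDegree_pow k
  split_ifs with h
  · rw [asum, mul_sum]
    symm
    refine Finset.sum_bij (fun g' _ => P ^ k * g') ?_ ?_ ?_ ?_
    · intro g' hg'
      obtain ⟨h1, h2⟩ := mem_monics.1 hg'
      refine mem_filter.2 ⟨mem_monics.2 ⟨hPk.mul h1, ?_⟩, dvd_mul_right _ _⟩
      rw [hPk.natDegree_mul h1, hdeg, h2]; omega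
    · intro a _ b _ hab
      exact mul_left_cancel₀ hPk.ne_zero hab
    · intro g hg
      obtain ⟨h1, g', rfl⟩ := mem_filter.1 hg
      obtain ⟨h2, h3⟩ := mem_monics.1 h1
      have h4 : g'.Monic := hPk.of_mul_monic_left h2
      refine ⟨g', mem_monics.2 ⟨h4, ?_⟩, rfl⟩
      rw [hPk.natDegree_mul h4, hdeg] at h3; omega
    · intro g' _
      rw [map_mul, map_pow]
  · apply sum_eq_zero
    intro g hg
    exfalso
    obtain ⟨h1, h2⟩ := mem_filter.1 hg
    obtain ⟨h3, h4⟩ := mem_monics.1 h1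
    have := natDegree_le_of_dvd h2 h3.ne_zero
    rw [hdeg] at this; omega

theorem L_rec (L : F[X] →* ℂ) (n : ℕ) :
    (n : ℂ) * asum L n = ∑ j ∈ Icc 1 n, Ssum L j * asum L (n - j) := by
  classical
  have h1 : (n : ℂ) * asum L n = ∑ P ∈ irrs F n, ∑ k ∈ Icc 1 n,
      (P.natDegree : ℂ) * ∑ g ∈ monics F n with P ^ k ∣ g, L g := by
    rw [asum, mul_sum]
    have : ∀ g ∈ monics F n, (n : ℂ) * L g = ∑ P ∈ irrs F n, ∑ k ∈ Icc 1 n,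
        (P.natDegree : ℂ) * (if P ^ k ∣ g then L g else 0) := by
      intro g hg
      have h := degree_count hg
      have h' : (n : ℂ) = ∑ P ∈ irrs F n, (P.natDegree : ℂ) * #{k ∈ Icc 1 n | P ^ k ∣ g} := by
        exact_mod_cast h
      conv_lhs => rw [h', sum_mul]
      refine sum_congr rfl fun P _ => ?_
      rw [← mul_sum, ← sum_filter, sum_const, nsmul_eq_mul]; ring
    rw [sum_congr rfl this, sum_comm]
    refine sum_congr rfl fun P _ => ?_
    rw [sum_comm]
    refine sum_congr rfl fun k _ => ?_
    rw [← mul_sum, sum_filter]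
  rw [h1]
  have h2 : ∀ j ∈ Icc 1 n, Ssum L j * asum L (n - j) = ∑ P ∈ irrs F n,
      if P.natDegree ∣ j then (P.natDegree : ℂ) * L P ^ (j / P.natDegree) * asum L (n - j) else 0 := by
    intro j hj
    rw [mem_Icc] at hj
    rw [Ssum, sum_mul]
    have hsub : irrs F j ⊆ irrs F n := by
      intro P hP
      obtain ⟨a, b, c⟩ := mem_irrs.1 hP
      exact mem_irrs.2 ⟨a, b, by omega⟩
    rw [← sum_subset hsub]
    · refine sum_congr rfl fun P _ => ?_
      split_ifs <;> simp
    · intro P hP hP'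
      rw [if_neg]
      intro hd
      obtain ⟨a, b, c⟩ := mem_irrs.1 hP
      exact hP' (mem_irrs.2 ⟨a, b, Nat.le_of_dvd (by omega) hd⟩)
  rw [sum_congr rfl h2]
  conv_rhs => rw [sum_comm]
  refine sum_congr rfl fun P hP => ?_
  obtain ⟨hPm, hPi, hPd⟩ := mem_irrs.1 hP
  have hpos := hPi.natDegree_pos
  rw [sum_congr rfl fun k _ => by rw [sum_dvd L hPm]]
  rw [← sum_filter]
  simp_rw [mul_ite, mul_zero]
  rw [← sum_filter]
  refine Finset.sum_bij' (fun k _ => k * P.natDegree) (fun j _ => j / P.natDegree) ?_ ?_ ?_ ?_ ?_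
  · intro k hk
    simp only [mem_filter, mem_Icc] at hk ⊢
    refine ⟨⟨?_, hk.2⟩, dvd_mul_left _ _⟩
    nlinarith
  · intro j hj
    simp only [mem_filter, mem_Icc] at hj ⊢
    obtain ⟨⟨ha, hb⟩, t, rfl⟩ := hj
    rw [Nat.mul_div_cancel_left _ hpos]
    refine ⟨⟨?_, ?_⟩, ?_⟩
    · by_contra h
      have : t = 0 := by omega
      subst this; simp at ha
    · nlinarith
    · rw [mul_comm]; exact hb
  · intro k hk; exact Nat.mul_div_cancel _ hpos
  · intro j hj
    simp only [mem_filter] at hj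
    exact Nat.div_mul_cancel hj.2
  · intro k hk
    rw [Nat.mul_div_cancel _ hpos]; ring

theorem asum_zero (L : F[X] →* ℂ) : asum L 0 = 1 := by
  have : monics F 0 = {1} := by
    ext g
    rw [mem_monics, mem_singleton]
    constructor
    · rintro ⟨h1, h2⟩; exact h1.natDegree_eq_zero.1 h2
    · rintro rfl; simp
  rw [asum, this]; simp

theorem norm_sub_minpoly {K : Type} [Field K] [Fintype K] [Algebra F K] (a : F) (x : K) :
    Algebra.norm F (algebraMap F K a - x) =
      ((minpoly F x).eval a) ^ (Module.finrank F K / (minpoly F x).natDegree) := by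
  have hfin : Module.Finite F K := Module.Finite.of_finite
  have hx : IsIntegral F x := Algebra.IsIntegral.isIntegral x
  set y := x - algebraMap F K a with hy
  have hyI : IsIntegral F y := Algebra.IsIntegral.isIntegral y
  have hmin : minpoly F y = (minpoly F x).comp (X + C a) := minpoly.sub_algebraMap x a
  have hdeg : (minpoly F y).natDegree = (minpoly F x).natDegree := by
    rw [hmin, natDegree_comp]; simp
  have hc0 : (minpoly F y).coeff 0 = (minpoly F x).eval a := by
    rw [hmin, coeff_zero_eq_eval_zero, eval_comp]; simp
  have h1 : algebraMap F K a - x = algebraMap F K (-1) * y := by rw [hy]; simp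
  rw [h1, map_mul, Algebra.norm_algebraMap, Algebra.norm_eq_norm_adjoin F y]
  have h2 : Algebra.norm F (IntermediateField.AdjoinSimple.gen F y) =
      (-1) ^ (minpoly F x).natDegree * (minpoly F x).eval a := by
    have := Algebra.PowerBasis.norm_gen_eq_coeff_zero_minpoly (IntermediateField.adjoin.powerBasis hyI)
    rw [IntermediateField.adjoin.powerBasis_gen, IntermediateField.adjoin.powerBasis_dim,
      IntermediateField.minpoly_gen, hdeg, hc0] at this
    exact this
  have h3 : Module.finrank F (IntermediateField.adjoin F {y}) = (minpoly F x).natDegree := by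
    rw [IntermediateField.adjoin.finrank hyI, hdeg]
  have h4 := Module.finrank_mul_finrank F (IntermediateField.adjoin F {y}) K
  have hpos : 0 < (minpoly F x).natDegree := minpoly.natDegree_pos hx
  rw [h3] at h4
  rw [← h4, Nat.mul_div_cancel_left _ hpos, h2, mul_pow, ← pow_mul, ← mul_assoc, ← mul_pow]
  simp

theorem card_minpoly_fiber {K : Type} [Field K] [Fintype K] [Algebra F K] [DecidableEq K] {P : F[X]} (hPm : P.Monic)
    (hPi : Irreducible P) (hd : P.natDegree ∣ Module.finrank F K) :
    Nat.card {x : K // minpoly F x = P} = P.natDegree := by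
  haveI : Fact (Irreducible P) := ⟨hPi⟩
  have h1 : Module.finrank F (AdjoinRoot P) = P.natDegree := by
    rw [(AdjoinRoot.powerBasis hPi.ne_zero).finrank, AdjoinRoot.powerBasis_dim]
  have h2 := FiniteField.natCard_algHom_of_finrank_dvd (F := F) (K := AdjoinRoot P) (L := K) (by rw [h1]; exact hd)
  rw [h1] at h2
  rw [← h2, Nat.card_congr (AdjoinRoot.equiv K F P hPi.ne_zero)]
  apply Nat.card_congr
  refine Equiv.subtypeEquivRight fun x => ?_
  rw [mem_aroots]
  constructor
  · rintro rfl; exact ⟨hPi.ne_zero, minpoly.aeval _ _⟩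
  · rintro ⟨_, h⟩; exact (minpoly.eq_of_irreducible_of_monic hPi h hPm).symm

theorem Ssum_eq {K : Type} [Field K] [Fintype K] [Algebra F K] (L : F[X] →* ℂ) :
    Ssum L (Module.finrank F K) =
      ∑ x : K, L (minpoly F x) ^ (Module.finrank F K / (minpoly F x).natDegree) := by
  classical
  have hfin : Module.Finite F K := Module.Finite.of_finite
  have hpos : 0 < Module.finrank F K := Module.finrank_pos
  have hdvd : ∀ x : K, (minpoly F x).natDegree ∣ Module.finrank F K := fun x => minpoly.degree_dvd (Algebra.IsIntegral.isIntegral x)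
  have hmaps : ∀ x ∈ (univ : Finset K), minpoly F x ∈ irrs F (Module.finrank F K) := by
    intro x _
    have hx : IsIntegral F x := Algebra.IsIntegral.isIntegral x
    exact mem_irrs.2 ⟨minpoly.monic hx, minpoly.irreducible hx, Nat.le_of_dvd hpos (hdvd x)⟩
  rw [← Finset.sum_fiberwise_of_maps_to hmaps, Ssum]
  refine sum_congr rfl fun P hP => ?_
  obtain ⟨hPm, hPi, hPd⟩ := mem_irrs.1 hP
  rw [sum_congr rfl (g := fun _ => L P ^ (Module.finrank F K / P.natDegree))
    (fun x hx => by rw [(mem_filter.1 hx).2]), sum_const, nsmul_eq_mul]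
  split_ifs with h
  · congr 2
    rw [← card_minpoly_fiber hPm hPi h, Nat.card_eq_fintype_card, Fintype.card_subtype]
  · rw [filter_eq_empty_iff.2]
    · simp
    · rintro x _ rfl; exact h (hdvd x)

end LFun


section Weil
open Polynomial

variable {p : ℕ} [Fact p.Prime]

noncomputable def Lam (χ : MulChar (ZMod p) ℂ) (S : Finset (ZMod p)) (e : ZMod p → ℕ) :
    (ZMod p)[X] →* ℂ where
  toFun g := ∏ α ∈ S, χ (g.eval α) ^ e α
  map_one' := by simp
  map_mul' g h := by simp [mul_pow, prod_mul_distrib]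

theorem Lam_asum (χ : MulChar (ZMod p) ℂ) (hχ : χ ≠ 1) (S : Finset (ZMod p)) (e : ZMod p → ℕ)
    (α₀ : ZMod p) (h0 : α₀ ∈ S) (he : e α₀ = 1) (n : ℕ) (hn : #S ≤ n) :
    asum (Lam χ S e) n = 0 := by
  classical
  set h : (ZMod p)[X] := ∏ α ∈ S.erase α₀, (X - C α) with hh
  have hdeg : h.natDegree < n := by
    rw [hh, natDegree_prod_of_monic _ _ (fun α _ => monic_X_sub_C α)]
    simp only [natDegree_X_sub_C, sum_const, smul_eq_mul, mul_one]
    rw [card_erase_of_mem h0]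
    have : 0 < #S := card_pos.2 ⟨_, h0⟩
    omega
  have hdeg' : ∀ t : ZMod p, (C t * h).natDegree < n := fun t =>
    lt_of_le_of_lt (natDegree_C_mul_le t h) hdeg
  have heval : ∀ α ∈ S.erase α₀, h.eval α = 0 := by
    intro α hα
    rw [hh, eval_prod]
    exact prod_eq_zero hα (by simp)
  have heval0 : h.eval α₀ ≠ 0 := by
    rw [hh, eval_prod, prod_ne_zero_iff]
    intro α hα
    simp only [eval_sub, eval_X, eval_C]
    exact sub_ne_zero.2 (ne_of_mem_erase hα).symm
  have hmon : ∀ t : ZMod p, ∀ g ∈ monics (ZMod p) n, g + C t * h ∈ monics (ZMod p) n := by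
    intro t g hg
    obtain ⟨h1, h2⟩ := mem_monics.1 hg
    have hlt : (C t * h).degree < g.degree := by
      apply degree_lt_degree; rw [h2]; exact hdeg' t
    refine mem_monics.2 ⟨h1.add_of_left hlt, ?_⟩
    rw [natDegree_add_eq_left_of_natDegree_lt (by rw [h2]; exact hdeg' t), h2]
  have htr : ∀ t : ZMod p, asum (Lam χ S e) n = ∑ g ∈ monics (ZMod p) n, Lam χ S e (g + C t * h) := by
    intro t
    rw [asum]
    refine Finset.sum_bij' (fun g _ => g + C (-t) * h) (fun g _ => g + C t * h)
      (fun g hg => hmon _ g hg) (fun g hg => hmon _ g hg) ?_ ?_ ?_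
    · intro g _; simp
    · intro g _; simp
    · intro g _; simp
  have hsum : (p : ℂ) * asum (Lam χ S e) n = 0 := by
    have : (p : ℂ) * asum (Lam χ S e) n = ∑ t : ZMod p, asum (Lam χ S e) n := by
      simp [ZMod.card]
    rw [this, sum_congr rfl (fun t _ => htr t), sum_comm]
    apply sum_eq_zero
    intro g _
    have : ∀ t : ZMod p, Lam χ S e (g + C t * h) =
        (∏ α ∈ S.erase α₀, χ (g.eval α) ^ e α) * χ (g.eval α₀ + t * h.eval α₀) := by
      intro t
      show ∏ α ∈ S, χ ((g + C t * h).eval α) ^ e α = _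
      rw [← prod_erase_mul S _ h0, he, pow_one]
      congr 1
      · refine prod_congr rfl fun α hα => ?_
        simp [heval α hα]
      · simp
    rw [sum_congr rfl fun t _ => this t, ← mul_sum]
    have hbij : ∑ t : ZMod p, χ (g.eval α₀ + t * h.eval α₀) = ∑ y : ZMod p, χ y := by
      refine Fintype.sum_bijective (fun t => g.eval α₀ + t * h.eval α₀) ?_ _ _ (fun _ => rfl)
      exact (Equiv.addLeft (g.eval α₀)).bijective.comp (mulRight_bijective₀ _ heval0)
    rw [hbij, MulChar.sum_eq_zero_of_ne_one hχ, mul_zero]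
  have hp : (p : ℂ) ≠ 0 := Nat.cast_ne_zero.2 (Fact.out : p.Prime).ne_zero
  exact (mul_eq_zero.1 hsum).resolve_left hp

theorem Lam_Ssum (χ : MulChar (ZMod p) ℂ) (S : Finset (ZMod p)) (e : ZMod p → ℕ)
    {K : Type} [Field K] [Fintype K] [Algebra (ZMod p) K] :
    Ssum (Lam χ S e) (Module.finrank (ZMod p) K) =
      ∑ x : K, χ (Algebra.norm (ZMod p) (∏ α ∈ S, (algebraMap (ZMod p) K α - x) ^ e α)) := by
  rw [Ssum_eq]
  refine sum_congr rfl fun x _ => ?_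
  show (∏ α ∈ S, χ ((minpoly (ZMod p) x).eval α) ^ e α) ^ _ = _
  rw [map_prod, map_prod, ← prod_pow]
  refine prod_congr rfl fun α _ => ?_
  rw [map_pow, map_pow, norm_sub_minpoly, map_pow, ← pow_mul, ← pow_mul, mul_comm]

theorem Lam_bound (χ : MulChar (ZMod p) ℂ) (hχ : χ ≠ 1) (S : Finset (ZMod p)) (e : ZMod p → ℕ)
    (α₀ : ZMod p) (h0 : α₀ ∈ S) (he : e α₀ = 1) :
    ∃ B : ℝ, ∀ n, 1 ≤ n → ‖Ssum (Lam χ S e) n‖ ≤ B * (Real.sqrt p) ^ n := by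
  classical
  have hp : p.Prime := Fact.out
  have hd : 0 < p - 1 := by have := hp.two_le; omega
  set m := ∑ α ∈ S, e α with hm
  obtain ⟨A, hA⟩ := stp_bound (p - 1) m hd
  refine ⟨A + m, fun n hn => ?_⟩
  have hn0 : n ≠ 0 := by omega
  let K := GaloisField p n
  have : Fintype K := Fintype.ofFinite K
  have hfr : Module.finrank (ZMod p) K = n := GaloisField.finrank p hn0
  have hcard : Fintype.card K = p ^ n := by
    rw [← Nat.card_eq_fintype_card]; exact GaloisField.card p n hn0
  set q := p ^ n with hq
  obtain ⟨E, hE⟩ : (p - 1) ∣ q - 1 := by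
    have := Nat.sub_dvd_pow_sub_pow p 1 n
    simpa using this
  have hq1 : 1 ≤ q := Nat.one_le_pow _ _ hp.pos
  have hqE : q = (p - 1) * E + 1 := by omega
  have hL := Lam_Ssum χ S e (K := K)
  rw [hfr] at hL
  -- the polynomial
  set g : K[X] := ∏ α ∈ S.erase α₀, (X + C (algebraMap (ZMod p) K (α - α₀))) ^ e α with hg
  set f : K[X] := X * g with hf
  have hfe : ∀ y : K, f.eval y = ∏ α ∈ S, (algebraMap (ZMod p) K α - (algebraMap (ZMod p) K α₀ - y)) ^ e α := by
    intro y
    rw [hf, hg, ← prod_erase_mul S _ h0, he, pow_one, eval_mul, eval_prod, mul_comm]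
    congr 1
    · refine prod_congr rfl fun α _ => ?_
      simp; ring
    · simp
  have hS : Ssum (Lam χ S e) n = ∑ y : K, χ (Algebra.norm (ZMod p) (f.eval y)) := by
    rw [hL]
    refine (Fintype.sum_bijective (fun y => algebraMap (ZMod p) K α₀ - y) ?_ _ _ (fun y => ?_)).symm
    · exact (Equiv.subLeft (algebraMap (ZMod p) K α₀)).bijective
    · rw [hfe]
  have hg0 : g.eval 0 ≠ 0 := by
    rw [hg, eval_prod, prod_ne_zero_iff]
    intro α hα
    simp only [eval_pow, eval_add, eval_X, eval_C, zero_add]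
    apply pow_ne_zero
    rw [Ne, map_eq_zero]
    exact sub_ne_zero.2 (ne_of_mem_erase hα)
  have hgne : g ≠ 0 := by rintro h; rw [h] at hg0; simp at hg0
  have hfne : f ≠ 0 := mul_ne_zero X_ne_zero hgne
  have hfd : f.natDegree ≤ m := by
    rw [hf, hm, ← add_sum_erase S _ h0, he]
    refine natDegree_mul_le.trans ?_
    refine add_le_add natDegree_X_le ?_
    rw [hg]
    refine (natDegree_prod_le _ _).trans (sum_le_sum fun α _ => ?_)
    refine natDegree_pow_le.trans ?_
    rw [natDegree_X_add_C, mul_one]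
  have hnorm : ∀ z : K, algebraMap (ZMod p) K (Algebra.norm (ZMod p) z) = z ^ E := by
    intro z
    rw [FiniteField.algebraMap_norm_eq_pow]
    congr 1
    rw [Nat.card_eq_fintype_card, Nat.card_eq_fintype_card, hcard, ZMod.card, hE]
    exact Nat.mul_div_cancel_left _ hd
  set N : ZMod p → ℕ := fun c => #{y : K | Algebra.norm (ZMod p) (f.eval y) = c} with hN
  have hNc : ∀ c : ZMod p, c ≠ 0 → (p - 1) * N c ≤ q + A * Nat.sqrt q := by
    intro c hc
    have h1 := hA K p n g f hg0 rfl E q hqE rfl hcard hfd (algebraMap (ZMod p) K c) (by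
      rw [Ne, map_eq_zero]; exact hc)
    refine le_trans (le_of_eq ?_) h1
    congr 1
    rw [hN]
    refine congrArg card (filter_congr fun y _ => ?_)
    rw [← hnorm]
    exact (algebraMap (ZMod p) K).injective.eq_iff.symm
  have hN0 : N 0 ≤ m := by
    refine le_trans ?_ hfd
    refine le_trans ?_ (card_roots' f)
    refine le_trans ?_ (Multiset.toFinset_card_le _)
    refine card_le_card fun y hy => ?_
    rw [mem_filter] at hy
    rw [Multiset.mem_toFinset, mem_roots hfne]
    have := hy.2
    rwa [Algebra.norm_eq_zero_iff] at this
  have hNs : ∑ c : ZMod p, N c = q := by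
    rw [← hcard, ← card_univ, card_eq_sum_card_fiberwise (f := fun y : K => Algebra.norm (ZMod p) (f.eval y)) (t := univ)]
    intro y _; simp
  have hS2 : Ssum (Lam χ S e) n = ∑ c : ZMod p, (N c : ℂ) * χ c := by
    rw [hS, ← Finset.sum_fiberwise_of_maps_to (g := fun y : K => Algebra.norm (ZMod p) (f.eval y)) (t := univ) (by intro y _; simp)]
    refine sum_congr rfl fun c _ => ?_
    rw [sum_congr rfl (g := fun _ => χ c) (fun y hy => by rw [(mem_filter.1 hy).2]), sum_const, nsmul_eq_mul]
  set T : ℝ := q + A * Nat.sqrt q with hT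
  have hS3 : ((p - 1 : ℕ) : ℂ) * Ssum (Lam χ S e) n =
      ∑ c ∈ univ.erase (0 : ZMod p), (((p - 1 : ℕ) * N c - T : ℝ) : ℂ) * χ c := by
    have h1 : ∑ c ∈ univ.erase (0 : ZMod p), (((p - 1 : ℕ) * N c - T : ℝ) : ℂ) * χ c =
        ∑ c : ZMod p, (((p - 1 : ℕ) * N c - T : ℝ) : ℂ) * χ c := by
      rw [← add_sum_erase univ _ (mem_univ (0 : ZMod p))]
      rw [MulChar.map_nonunit χ (by simp)]; simp
    rw [h1, hS2, mul_sum]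
    have h2 := MulChar.sum_eq_zero_of_ne_one hχ
    rw [← sub_eq_zero, ← sum_sub_distrib]
    have : ∀ c : ZMod p, ((p - 1 : ℕ) : ℂ) * ((N c : ℂ) * χ c) - (((p - 1 : ℕ) * N c - T : ℝ) : ℂ) * χ c = T * χ c := by
      intro c; push_cast; ring
    rw [sum_congr rfl fun c _ => this c, ← mul_sum, h2, mul_zero]
  have hχ1 : ∀ c : ZMod p, ‖χ c‖ ≤ 1 := fun c => by
    exact DirichletCharacter.norm_le_one χ c
  have hS4 : ((p - 1 : ℕ) : ℝ) * ‖Ssum (Lam χ S e) n‖ ≤ ∑ c ∈ univ.erase (0 : ZMod p), (T - (p - 1 : ℕ) * N c) := by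
    have : ((p - 1 : ℕ) : ℝ) * ‖Ssum (Lam χ S e) n‖ = ‖((p - 1 : ℕ) : ℂ) * Ssum (Lam χ S e) n‖ := by
      rw [norm_mul, Complex.norm_natCast]
    rw [this, hS3]
    refine (norm_sum_le _ _).trans (sum_le_sum fun c hc => ?_)
    rw [norm_mul, Complex.norm_real, Real.norm_eq_abs]
    have h1 := hNc c (ne_of_mem_erase hc)
    have h2 : ((p - 1 : ℕ) : ℝ) * N c ≤ T := by rw [hT]; exact_mod_cast h1
    rw [abs_of_nonpos (by linarith)]
    have := hχ1 c
    nlinarith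
  have hS5 : ∑ c ∈ univ.erase (0 : ZMod p), (T - (p - 1 : ℕ) * N c) = (p - 1 : ℕ) * (A * Nat.sqrt q + N 0) := by
    rw [sum_sub_distrib, ← mul_sum, sum_const, card_erase_of_mem (mem_univ _), card_univ, ZMod.card, nsmul_eq_mul]
    have h1 : ∑ c ∈ univ.erase (0 : ZMod p), (N c : ℝ) = q - N 0 := by
      have := add_sum_erase univ (fun c => (N c : ℝ)) (mem_univ (0 : ZMod p))
      have h2 : ∑ c : ZMod p, (N c : ℝ) = q := by exact_mod_cast hNs
      linarith
    rw [h1, hT]; ring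
  rw [hS5] at hS4
  have hd' : (0 : ℝ) < ((p - 1 : ℕ) : ℝ) := by exact_mod_cast hd
  have h6 := le_of_mul_le_mul_left hS4 hd'
  have h7 : (Nat.sqrt q : ℝ) ≤ (Real.sqrt p) ^ n := by
    have : (Real.sqrt p) ^ n = Real.sqrt q := by
      rw [hq]; push_cast
      rw [Real.sqrt_eq_rpow, Real.sqrt_eq_rpow, ← Real.rpow_natCast, ← Real.rpow_natCast, ← Real.rpow_mul (by positivity), ← Real.rpow_mul (by positivity), mul_comm]
    rw [this]
    exact Real.nat_sqrt_le_real_sqrt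
  have h8 : (1 : ℝ) ≤ (Real.sqrt p) ^ n := by
    apply one_le_pow₀
    rw [Real.one_le_sqrt]
    exact_mod_cast hp.one_le
  have h9 : (N 0 : ℝ) ≤ m := by exact_mod_cast hN0
  have hA0 : (0 : ℝ) ≤ A := by positivity
  have hm0 : (0 : ℝ) ≤ m := by positivity
  nlinarith [mul_le_mul_of_nonneg_left h7 hA0, mul_le_mul_of_nonneg_left h8 hm0]

/-- Weil bound -/
theorem weil_bound (χ : MulChar (ZMod p) ℂ) (hχ : χ ≠ 1) (S : Finset (ZMod p)) (e : ZMod p → ℕ)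
    (α₀ : ZMod p) (h0 : α₀ ∈ S) (he : e α₀ = 1) :
    ‖∑ x : ZMod p, ∏ α ∈ S, χ (α - x) ^ e α‖ ≤ #S * Real.sqrt p := by
  have hp : p.Prime := Fact.out
  have hS : 0 < #S := card_pos.2 ⟨_, h0⟩
  obtain ⟨B, hB⟩ := Lam_bound χ hχ S e α₀ h0 he
  obtain ⟨w, hw⟩ := newton_seq (asum (Lam χ S e)) (Ssum (Lam χ S e)) #S (asum_zero _)
    (fun n hn => Lam_asum χ hχ S e α₀ h0 he n (by omega)) (L_rec _)
  have hr := psum_radius w B (Real.sqrt p) (Real.sqrt_pos.2 (by exact_mod_cast hp.pos)) (by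
    intro n hn
    have := hB n hn
    rwa [hw n hn, norm_neg] at this)
  have h1 := Lam_Ssum χ S e (K := ZMod p)
  rw [Module.finrank_self, hw 1 le_rfl] at h1
  have h2 : ∑ x : ZMod p, ∏ α ∈ S, χ (α - x) ^ e α = - ∑ i, w i ^ 1 := by
    rw [h1]
    refine sum_congr rfl fun x _ => ?_
    rw [Algebra.norm_self, MonoidHom.id_apply, map_prod]
    refine prod_congr rfl fun α _ => ?_
    simp
  rw [h2, norm_neg]
  refine (norm_sum_le _ _).trans ?_
  refine (sum_le_sum (g := fun _ => Real.sqrt p) fun i _ => ?_).trans ?_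
  · rw [pow_one]; exact hr i
  · simp

end Weil


section Moment

variable {p : ℕ} [Fact p.Prime]

theorem mulchar_inv_pow (hp3 : 3 ≤ p) (χ : MulChar (ZMod p) ℂ) (x : ZMod p) :
    χ⁻¹ x = χ x ^ (p - 2) := by
  rw [MulChar.inv_apply']
  by_cases hx : x = 0
  · subst hx
    rw [inv_zero, MulChar.map_nonunit χ (by simp), zero_pow (by omega)]
  · rw [← map_pow]
    congr 1
    have h1 := ZMod.pow_card_sub_one_eq_one hx
    have h2 : p - 1 = (p - 2) + 1 := by omega
    rw [h2, pow_succ] at h1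
    exact (eq_inv_of_mul_eq_one_left h1).symm

theorem weil_tuple {ι : Type} [Fintype ι] [DecidableEq ι] (hp3 : 3 ≤ p) (χ : MulChar (ZMod p) ℂ) (hχ : χ ≠ 1)
    (ψ : ι → MulChar (ZMod p) ℂ) (hψ : ∀ i, ψ i = χ ∨ ψ i = χ⁻¹) (κ : ι → ZMod p) (i₀ : ι)
    (h : ∀ i, i ≠ i₀ → κ i ≠ κ i₀) :
    ‖∑ x : ZMod p, ∏ i, ψ i (x + κ i)‖ ≤ Fintype.card ι * Real.sqrt p := by
  classical
  set χ' := ψ i₀ with hχ'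
  have hχ'1 : χ' ≠ 1 := by
    rcases hψ i₀ with h | h
    · rw [hχ', h]; exact hχ
    · rw [hχ', h]; exact inv_ne_one.2 hχ
  have hψ' : ∀ i, ψ i = χ' ∨ ψ i = χ'⁻¹ := by
    intro i
    rcases hψ i₀ with h | h <;> rcases hψ i with h' | h' <;> simp [hχ', h, h']
  set s : ι → ℕ := fun i => if ψ i = χ' then 1 else p - 2 with hs
  have hs1 : ∀ i x, ψ i x = χ' x ^ s i := by
    intro i x
    simp only [hs]
    split_ifs with hi
    · rw [hi, pow_one]
    · rw [(hψ' i).resolve_left hi, mulchar_inv_pow hp3]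
  set S := univ.image κ with hS
  set e : ZMod p → ℕ := fun α => ∑ i with κ i = α, s i with he
  have h0 : κ i₀ ∈ S := mem_image_of_mem _ (mem_univ _)
  have he0 : e (κ i₀) = 1 := by
    have : (univ.filter fun i => κ i = κ i₀) = {i₀} := by
      ext i
      simp only [mem_filter, mem_univ, true_and, mem_singleton]
      constructor
      · intro hi; by_contra hne; exact h i hne hi
      · rintro rfl; rfl
    simp only [he]
    rw [this, sum_singleton]; simp [hs, hχ']
  have hw := weil_bound χ' hχ'1 S e (κ i₀) h0 he0
  have heq : ∑ x : ZMod p, ∏ i, ψ i (x + κ i) = ∑ x : ZMod p, ∏ α ∈ S, χ' (α - x) ^ e α := by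
    refine Fintype.sum_equiv (Equiv.neg _) _ _ fun x => ?_
    have : ∀ i ∈ (univ : Finset ι), κ i ∈ S := fun i hi => mem_image_of_mem _ hi
    rw [← prod_fiberwise_of_maps_to this]
    refine prod_congr rfl fun α _ => ?_
    simp only [he]
    rw [← prod_pow_eq_pow_sum]
    refine prod_congr rfl fun i hi => ?_
    rw [hs1, (mem_filter.1 hi).2]
    congr 2
    simp [add_comm]
  rw [heq]
  refine hw.trans ?_
  gcongr
  exact card_image_le

theorem bad_count {ι : Type} [Fintype ι] [DecidableEq ι] (r K : ℕ) (hι : Fintype.card ι = 2 * r) (hK : 0 < K) :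
    #{κ : ι → Fin K | ∀ i₀, ∃ i, i ≠ i₀ ∧ κ i = κ i₀} ≤ r ^ (2 * r) * K ^ r := by
  classical
  have hcard : r ^ (2 * r) * K ^ r = Fintype.card ((ι → Fin r) × (Fin r → Fin K)) := by
    simp [hι]
  rw [hcard, ← card_univ]
  refine le_trans (card_le_card (t := univ.image fun ab : (ι → Fin r) × (Fin r → Fin K) => ab.2 ∘ ab.1) ?_) card_image_le
  intro κ hκ
  have hκ' := (mem_filter.1 hκ).2
  have h1 : 2 * #(univ.image κ) ≤ 2 * r := by
    rw [← hι, ← card_univ, card_eq_sum_card_image κ univ, mul_comm]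
    rw [← smul_eq_mul]
    apply card_nsmul_le_sum
    intro v hv
    obtain ⟨i₀, _, rfl⟩ := mem_image.1 hv
    obtain ⟨i, hi, hi'⟩ := hκ' i₀
    refine one_lt_card.2 ⟨i, by simp [hi'], i₀, by simp, hi⟩
  have h2 : #(univ.image κ) ≤ r := by omega
  have h3 : Fintype.card (univ.image κ) ≤ Fintype.card (Fin r) := by
    rw [Fintype.card_coe, Fintype.card_fin]; exact h2
  obtain ⟨g⟩ := Function.Embedding.nonempty_of_card_le h3
  have : Nonempty (Fin K) := ⟨⟨0, hK⟩⟩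
  rw [mem_image]
  by_cases hι0 : Nonempty (univ.image κ)
  · refine ⟨(fun i => g ⟨κ i, mem_image_of_mem _ (mem_univ _)⟩, fun j => (Function.invFun g j : univ.image κ)), mem_univ _, ?_⟩
    funext i
    simp only [Function.comp]
    rw [Function.leftInverse_invFun g.injective]
  · have hE : IsEmpty ι := ⟨fun i => hι0 ⟨⟨κ i, mem_image_of_mem _ (mem_univ _)⟩⟩⟩
    refine ⟨(fun i => hE.elim i, fun _ => ⟨0, hK⟩), mem_univ _, ?_⟩
    funext i; exact hE.elim i

theorem moment_bound (hp3 : 3 ≤ p) (χ : MulChar (ZMod p) ℂ) (hχ : χ ≠ 1) (r K : ℕ) (hK : 0 < K) (hKp : K ≤ p) :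
    ∑ x : ZMod p, ‖∑ k ∈ range K, χ (x + k)‖ ^ (2 * r) ≤
      r ^ (2 * r) * K ^ r * p + 2 * r * K ^ (2 * r) * Real.sqrt p := by
  classical
  let ι := Fin r ⊕ Fin r
  have hι : Fintype.card ι = 2 * r := by simp [ι, two_mul]
  let ψ : ι → MulChar (ZMod p) ℂ := Sum.elim (fun _ => χ) (fun _ => χ⁻¹)
  have hψ : ∀ i, ψ i = χ ∨ ψ i = χ⁻¹ := by rintro (i | i) <;> simp [ψ]
  have hψ1 : ∀ i x, ‖ψ i x‖ ≤ 1 := fun i x => DirichletCharacter.norm_le_one (ψ i) x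
  have hexp : ∀ x : ZMod p, ((‖∑ k ∈ range K, χ (x + k)‖ ^ (2 * r) : ℝ) : ℂ) =
      ∑ κ : ι → Fin K, ∏ i, ψ i (x + ((κ i : ℕ) : ZMod p)) := by
    intro x
    have h1 := Finset.prod_univ_sum (fun _ : ι => (univ : Finset (Fin K)))
      (fun i (k : Fin K) => ψ i (x + ((k : ℕ) : ZMod p)))
    rw [Fintype.piFinset_univ] at h1
    rw [← h1, Fintype.prod_sum_type]
    simp only [ψ, Sum.elim_inl, Sum.elim_inr, prod_const, card_univ, Fintype.card_fin]
    have h2 : ∑ k : Fin K, χ (x + ((k : ℕ) : ZMod p)) = ∑ k ∈ range K, χ (x + k) :=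
      Fin.sum_univ_eq_sum_range (fun k => χ (x + (k : ZMod p))) K
    have h3 : ∑ k : Fin K, χ⁻¹ (x + ((k : ℕ) : ZMod p)) = (starRingEnd ℂ) (∑ k ∈ range K, χ (x + k)) := by
      rw [← h2, map_sum]
      refine sum_congr rfl fun k _ => ?_
      rw [← MulChar.star_apply']; rfl
    rw [h2, h3, ← mul_pow, Complex.mul_conj, Complex.normSq_eq_norm_sq, pow_mul]
    push_cast; rfl
  have hsum : ((∑ x : ZMod p, ‖∑ k ∈ range K, χ (x + k)‖ ^ (2 * r) : ℝ) : ℂ) =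
      ∑ κ : ι → Fin K, ∑ x : ZMod p, ∏ i, ψ i (x + ((κ i : ℕ) : ZMod p)) := by
    rw [sum_comm, Complex.ofReal_sum]
    exact sum_congr rfl fun x _ => hexp x
  have hle : ∑ x : ZMod p, ‖∑ k ∈ range K, χ (x + k)‖ ^ (2 * r) ≤
      ∑ κ : ι → Fin K, ‖∑ x : ZMod p, ∏ i, ψ i (x + ((κ i : ℕ) : ZMod p))‖ := by
    refine le_trans ?_ (norm_sum_le _ _)
    rw [← hsum, Complex.norm_real]
    exact le_abs_self _
  refine hle.trans ?_
  rw [← sum_filter_add_sum_filter_not univ (fun κ : ι → Fin K => ∀ i₀, ∃ i, i ≠ i₀ ∧ κ i = κ i₀)]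
  refine add_le_add ?_ ?_
  · have hb := bad_count (ι := ι) r K hι hK
    have hb' : ((#{κ : ι → Fin K | ∀ i₀, ∃ i, i ≠ i₀ ∧ κ i = κ i₀} : ℕ) : ℝ) ≤ r ^ (2 * r) * K ^ r := by
      exact_mod_cast hb
    refine (sum_le_card_nsmul _ _ (p : ℝ) fun κ _ => ?_).trans ?_
    · refine (norm_sum_le _ _).trans ?_
      refine (sum_le_card_nsmul _ _ (1 : ℝ) fun x _ => ?_).trans ?_
      · rw [norm_prod]
        exact prod_le_one (fun i _ => norm_nonneg _) (fun i _ => hψ1 _ _)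
      · simp [ZMod.card]
    · rw [nsmul_eq_mul]
      gcongr
  · refine (sum_le_card_nsmul _ _ (2 * r * Real.sqrt p : ℝ) fun κ hκ => ?_).trans ?_
    · have h1 := (mem_filter.1 hκ).2
      push Not at h1
      obtain ⟨i₀, hi₀⟩ := h1
      have := weil_tuple hp3 χ hχ ψ hψ (fun i => ((κ i : ℕ) : ZMod p)) i₀ (by
        intro i hi heq
        apply hi₀ i hi
        have h5 := (ZMod.natCast_eq_natCast_iff' _ _ _).1 heq
        rw [Nat.mod_eq_of_lt (by have := (κ i).2; omega), Nat.mod_eq_of_lt (by have := (κ i₀).2; omega)] at h5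
        exact Fin.ext h5)
      rw [hι] at this
      push_cast at this
      exact this
    · rw [nsmul_eq_mul]
      have h1 : (#(univ.filter fun κ : ι → Fin K => ¬ ∀ i₀, ∃ i, i ≠ i₀ ∧ κ i = κ i₀) : ℝ) ≤ K ^ (2 * r) := by
        have : #(univ.filter fun κ : ι → Fin K => ¬ ∀ i₀, ∃ i, i ≠ i₀ ∧ κ i = κ i₀) ≤ K ^ (2 * r) := by
          refine (card_filter_le _ _).trans ?_
          rw [card_univ, Fintype.card_fun, hι, Fintype.card_fin]
        exact_mod_cast this
      calc _ ≤ (K : ℝ) ^ (2 * r) * (2 * r * Real.sqrt p) := by gcongr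
        _ = _ := by ring

end Moment


theorem card_le_of_spread (T : Finset ℤ) (m D : ℕ) (hm : 0 < m)
    (h : ∀ x ∈ T, ∀ y ∈ T, x ≤ y → (m : ℤ) ∣ y - x ∧ y - x ≤ D) : #T ≤ D / m + 1 := by
  rcases T.eq_empty_or_nonempty with rfl | hne
  · simp
  obtain ⟨x0, hx0, hmin⟩ := T.exists_min_image id hne
  rw [← card_range (D / m + 1)]
  refine card_le_card_of_injOn (fun y => ((y - x0) / m).toNat) ?_ ?_
  · intro y hy
    obtain ⟨⟨t, ht⟩, h2⟩ := h x0 hx0 y hy (hmin y hy)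
    have hmin' := hmin y hy
    simp only [id] at hmin'
    simp only [coe_range, Set.mem_Iio]
    have hm' : (m : ℤ) ≠ 0 := by positivity
    rw [ht, Int.mul_ediv_cancel_left _ hm']
    have ht0 : 0 ≤ t := by
      by_contra hneg
      push Not at hneg
      have : (m : ℤ) * t < 0 := mul_neg_of_pos_of_neg (by positivity) hneg
      omega
    obtain ⟨n, rfl⟩ := Int.eq_ofNat_of_zero_le ht0
    simp only [Int.toNat_natCast]
    rw [Nat.lt_succ_iff, Nat.le_div_iff_mul_le hm]
    rw [ht] at h2
    have : m * n ≤ D := by exact_mod_cast h2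
    linarith [mul_comm m n]
  · intro y hy z hz hyz
    simp only at hyz
    obtain ⟨⟨t, ht⟩, h2⟩ := h x0 hx0 y hy (hmin y hy)
    obtain ⟨⟨t', ht'⟩, h2'⟩ := h x0 hx0 z hz (hmin z hz)
    have hm' : (m : ℤ) ≠ 0 := by positivity
    have hmy := hmin y hy
    have hmz := hmin z hz
    simp only [id] at hmy hmz
    rw [ht, ht', Int.mul_ediv_cancel_left _ hm', Int.mul_ediv_cancel_left _ hm'] at hyz
    have hm0 : (0 : ℤ) < m := by exact_mod_cast hm
    have ht0 : 0 ≤ t := by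
      by_contra hneg
      push Not at hneg
      have := mul_neg_of_pos_of_neg hm0 hneg
      omega
    have ht0' : 0 ≤ t' := by
      by_contra hneg
      push Not at hneg
      have := mul_neg_of_pos_of_neg hm0 hneg
      omega
    have : t = t' := by omega
    subst this
    omega

/-- pairs with fixed value of `a β - ν` -/
theorem pair_fiber (A B L a : ℕ) (hA : 0 < A) (ha : A ≤ a) (w : ℤ) :
    #{y ∈ range B ×ˢ range L | (a : ℤ) * y.1 - y.2 = w} ≤ L / A + 1 := by
  classical
  set Q := (range B ×ˢ range L).filter fun y => (a : ℤ) * y.1 - y.2 = w with hQ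
  have h1 : #Q = #(Q.image fun y => (y.1 : ℤ)) := by
    rw [card_image_of_injOn]
    intro y hy z hz hyz
    have hy' := (mem_filter.1 hy).2
    have hz' := (mem_filter.1 hz).2
    simp only [Nat.cast_inj] at hyz
    rw [hyz] at hy'
    refine Prod.ext hyz ?_
    omega
  rw [h1]
  have h2 := card_le_of_spread (Q.image fun y => (y.1 : ℤ)) 1 (L / A) one_pos (by
    intro x hx y hy hxy
    refine ⟨by simp, ?_⟩
    obtain ⟨u, hu, rfl⟩ := mem_image.1 hx
    obtain ⟨v, hv, rfl⟩ := mem_image.1 hy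
    obtain ⟨hu1, hu2⟩ := mem_filter.1 hu
    obtain ⟨hv1, hv2⟩ := mem_filter.1 hv
    simp only [mem_product, mem_range] at hu1 hv1
    have hxy' : u.1 ≤ v.1 := by exact_mod_cast hxy
    have h3 : (a : ℤ) * (v.1 - u.1) ≤ L := by
      have : (a : ℤ) * (v.1 - u.1) = v.2 - u.2 := by linarith
      rw [this]; omega
    have h4 : a * (v.1 - u.1) ≤ L := by
      zify [hxy']; exact h3
    have h5 : v.1 - u.1 ≤ L / A := by
      rw [Nat.le_div_iff_mul_le hA]
      calc (v.1 - u.1) * A ≤ (v.1 - u.1) * a := by gcongr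
        _ ≤ L := by rw [mul_comm]; exact h4
    have h6 : ((v.1 - u.1 : ℕ) : ℤ) ≤ ((L / A : ℕ) : ℤ) := by exact_mod_cast h5
    rwa [Nat.cast_sub hxy'] at h6)
  simpa using h2

set_option maxHeartbeats 1000000 in
theorem energy_fixed {p : ℕ} [Fact p.Prime] (A B L H a a' h h' : ℕ) (b0 v0 : ZMod p)
    (hA : 0 < A) (hH : 0 < H) (hHB : H ≤ B) (hL : L ≤ A * B) (hp : 24 * (A * B) ^ 2 < p)
    (ha : a ∈ Ico A (2 * A)) (ha' : a' ∈ Ico A (2 * A)) (hh : h ∈ Ico H (2 * H)) (hh' : h' ∈ Ico H (2 * H)) :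
    #{yy ∈ (range B ×ˢ range L) ×ˢ (range B ×ˢ range L) |
      ((a : ZMod p) * (b0 + yy.1.1) - (v0 + yy.1.2)) / (a * h) =
      ((a' : ZMod p) * (b0 + yy.2.1) - (v0 + yy.2.2)) / (a' * h')} ≤
    (L / A + 1) * (L / A + 1) * (3 * (A * B) / (a * h / Nat.gcd (a * h) (a' * h')) + 1) := by
  classical
  rw [mem_Ico] at ha ha' hh hh'
  have hB : 0 < B := by omega
  have hAB1 : A ≤ A * B := Nat.le_mul_of_pos_right A hB
  have hAB2 : B ≤ A * B := Nat.le_mul_of_pos_left B hA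
  have hAB3 : A * B ≤ (A * B) ^ 2 := Nat.le_self_pow (by norm_num) _
  have h2A : 2 * A < p := by omega
  have h2H : 2 * H < p := by omega
  have hne : ∀ n : ℕ, 0 < n → n < p → (n : ZMod p) ≠ 0 := by
    intro n h0 h1 h2
    rw [ZMod.natCast_eq_zero_iff] at h2
    exact absurd (Nat.le_of_dvd h0 h2) (by omega)
  have hs0 : (a : ZMod p) * h ≠ 0 := mul_ne_zero (hne _ (by omega) (by omega)) (hne _ (by omega) (by omega))
  have hs0' : (a' : ZMod p) * h' ≠ 0 := mul_ne_zero (hne _ (by omega) (by omega)) (hne _ (by omega) (by omega))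
  set Q := ((range B ×ˢ range L) ×ˢ (range B ×ˢ range L)).filter fun yy : (ℕ × ℕ) × (ℕ × ℕ) =>
      ((a : ZMod p) * (b0 + yy.1.1) - (v0 + yy.1.2)) / (a * h) =
      ((a' : ZMod p) * (b0 + yy.2.1) - (v0 + yy.2.2)) / (a' * h') with hQ
  set s := a * h with hs
  set s' := a' * h' with hs'
  have hspos : 0 < s := Nat.mul_pos (by omega) (by omega)
  have hspos' : 0 < s' := Nat.mul_pos (by omega) (by omega)
  have hsle : s ≤ 4 * (A * H) := by 
    rw [hs]; exact (Nat.mul_le_mul ha.2.le hh.2.le).trans (by ring_nf; exact le_rfl)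
  have hsle' : s' ≤ 4 * (A * H) := by 
    rw [hs']; exact (Nat.mul_le_mul ha'.2.le hh'.2.le).trans (by ring_nf; exact le_rfl)
  set W : (ℕ × ℕ) × (ℕ × ℕ) → ℤ := fun yy => (a : ℤ) * yy.1.1 - yy.1.2 with hW
  set W' : (ℕ × ℕ) × (ℕ × ℕ) → ℤ := fun yy => (a' : ℤ) * yy.2.1 - yy.2.2 with hW'
  have hrange : ∀ (c : ℕ) (y : ℕ × ℕ), c ∈ Ico A (2 * A) → y ∈ range B ×ˢ range L → 
      -((A * B : ℕ) : ℤ) < (c : ℤ) * y.1 - y.2 ∧ (c : ℤ) * y.1 - y.2 ≤ 2 * ((A * B : ℕ) : ℤ) := by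
    intro c y hc hy
    rw [mem_Ico] at hc
    simp only [mem_product, mem_range] at hy
    have h1 : c * y.1 ≤ 2 * (A * B) := by
      exact (Nat.mul_le_mul hc.2.le hy.1.le).trans (by ring_nf; exact le_rfl)
    have h1' : (c : ℤ) * y.1 ≤ 2 * ((A * B : ℕ) : ℤ) := by exact_mod_cast h1
    have h2 : 0 ≤ (c : ℤ) * y.1 := by positivity
    constructor <;> omega
  have hdiff : ∀ y ∈ Q, ∀ z ∈ Q, (s' : ℤ) * (W z - W y) = s * (W' z - W' y) := by
    intro y hy z hz
    obtain ⟨hy1, hy2⟩ := mem_filter.1 hy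
    obtain ⟨hz1, hz2⟩ := mem_filter.1 hz
    rw [mem_product] at hy1 hz1
    rw [div_eq_div_iff hs0 hs0'] at hy2 hz2
    have hc : (((s' : ℤ) * (W z - W y) - s * (W' z - W' y) : ℤ) : ZMod p) = 0 := by
      simp only [hW, hW', hs, hs']
      push_cast
      linear_combination hz2 - hy2
    rw [ZMod.intCast_zmod_eq_zero_iff_dvd] at hc
    have e1 : -((A * B : ℕ) : ℤ) < W y ∧ W y ≤ 2 * ((A * B : ℕ) : ℤ) := hrange a y.1 (mem_Ico.2 ha) hy1.1
    have e2 : -((A * B : ℕ) : ℤ) < W z ∧ W z ≤ 2 * ((A * B : ℕ) : ℤ) := hrange a z.1 (mem_Ico.2 ha) hz1.1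
    have e3 : -((A * B : ℕ) : ℤ) < W' y ∧ W' y ≤ 2 * ((A * B : ℕ) : ℤ) := hrange a' y.2 (mem_Ico.2 ha') hy1.2
    have e4 : -((A * B : ℕ) : ℤ) < W' z ∧ W' z ≤ 2 * ((A * B : ℕ) : ℤ) := hrange a' z.2 (mem_Ico.2 ha') hz1.2
    have f1 : |W z - W y| ≤ 3 * ((A * B : ℕ) : ℤ) := by 
      rw [abs_le]; constructor <;> linarith [e1.1, e1.2, e2.1, e2.2]
    have f2 : |W' z - W' y| ≤ 3 * ((A * B : ℕ) : ℤ) := by 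
      rw [abs_le]; constructor <;> linarith [e3.1, e3.2, e4.1, e4.2]
    have hAH : A * H ≤ A * B := Nat.mul_le_mul_left _ hHB
    have g1 : (s : ℤ) ≤ 4 * ((A * B : ℕ) : ℤ) := by exact_mod_cast hsle.trans (by omega)
    have g2 : (s' : ℤ) ≤ 4 * ((A * B : ℕ) : ℤ) := by exact_mod_cast hsle'.trans (by omega)
    have hlt : |(s' : ℤ) * (W z - W y) - s * (W' z - W' y)| < p := by
      calc _ ≤ |(s' : ℤ) * (W z - W y)| + |s * (W' z - W' y)| := abs_sub _ _
        _ = s' * |W z - W y| + s * |W' z - W' y| := by simp [abs_mul]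
        _ ≤ (4 * ((A * B : ℕ) : ℤ)) * (3 * ((A * B : ℕ) : ℤ)) + (4 * ((A * B : ℕ) : ℤ)) * (3 * ((A * B : ℕ) : ℤ)) := by
            gcongr
        _ = ((24 * (A * B) ^ 2 : ℕ) : ℤ) := by push_cast; ring
        _ < p := by exact_mod_cast hp
    have := Int.eq_zero_of_abs_lt_dvd hc hlt
    linarith
  set g := Nat.gcd s s' with hg
  have hgpos : 0 < g := Nat.gcd_pos_of_pos_left _ hspos
  have hgd : g ∣ s := Nat.gcd_dvd_left _ _
  have hm : 0 < s / g := Nat.div_pos (Nat.le_of_dvd hspos hgd) hgpos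
  have hdvd : ∀ y ∈ Q, ∀ z ∈ Q, ((s / g : ℕ) : ℤ) ∣ W z - W y := by
    intro y hy z hz
    have h1 := hdiff y hy z hz
    have h2 : (s : ℤ) = g * (s / g : ℕ) := by exact_mod_cast (Nat.mul_div_cancel' hgd).symm
    have h3 : (s' : ℤ) = g * (s' / g : ℕ) := by exact_mod_cast (Nat.mul_div_cancel' (Nat.gcd_dvd_right s s')).symm
    rw [h2, h3] at h1
    have h4 : ((s' / g : ℕ) : ℤ) * (W z - W y) = (s / g : ℕ) * (W' z - W' y) := by
      have : (g : ℤ) ≠ 0 := by positivity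
      apply mul_left_cancel₀ this
      linarith
    have hcop : Nat.Coprime (s / g) (s' / g) := Nat.coprime_div_gcd_div_gcd hgpos
    have : IsCoprime ((s / g : ℕ) : ℤ) ((s' / g : ℕ) : ℤ) := Nat.isCoprime_iff_coprime.2 hcop
    exact this.dvd_of_dvd_mul_left ⟨_, h4⟩
  have hWcard : #(Q.image W) ≤ 3 * (A * B) / (s / g) + 1 := by
    apply card_le_of_spread _ _ _ hm
    intro x hx y hy hxy
    obtain ⟨u, hu, rfl⟩ := mem_image.1 hx
    obtain ⟨v, hv, rfl⟩ := mem_image.1 hy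
    refine ⟨hdvd u hu v hv, ?_⟩
    have e1 : -((A * B : ℕ) : ℤ) < W u ∧ W u ≤ 2 * ((A * B : ℕ) : ℤ) := hrange a u.1 (mem_Ico.2 ha) (mem_product.1 (mem_filter.1 hu).1).1
    have e2 : -((A * B : ℕ) : ℤ) < W v ∧ W v ≤ 2 * ((A * B : ℕ) : ℤ) := hrange a v.1 (mem_Ico.2 ha) (mem_product.1 (mem_filter.1 hv).1).1
    have : ((3 * (A * B) : ℕ) : ℤ) = 3 * ((A * B : ℕ) : ℤ) := by push_cast; ring
    rw [this]
    linarith [e1.1, e2.2]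
  have hfib : ∀ w ∈ Q.image W, #{y ∈ Q | W y = w} ≤ (L / A + 1) * (L / A + 1) := by
    intro w hw
    obtain ⟨u, hu, rfl⟩ := mem_image.1 hw
    refine le_trans (card_le_card (t := ((range B ×ˢ range L).filter fun y => (a : ℤ) * y.1 - y.2 = W u) ×ˢ
      ((range B ×ˢ range L).filter fun y => (a' : ℤ) * y.1 - y.2 = W' u)) ?_) ?_
    · intro y hy
      obtain ⟨hy1, hy2⟩ := mem_filter.1 hy
      have hy3 := mem_product.1 (mem_filter.1 hy1).1
      refine mem_product.2 ⟨mem_filter.2 ⟨hy3.1, hy2⟩, mem_filter.2 ⟨hy3.2, ?_⟩⟩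
      have h1 := hdiff u hu y hy1
      rw [hy2, sub_self, mul_zero] at h1
      have h2 : (s : ℤ) ≠ 0 := by positivity
      have h3 := (mul_eq_zero.1 h1.symm).resolve_left h2
      have h4 : W' y = W' u := by linarith
      exact h4
    · rw [card_product]
      exact Nat.mul_le_mul (pair_fiber A B L a hA ha.1 _) (pair_fiber A B L a' hA ha'.1 _)
  have := card_le_mul_card_image (f := W) Q ((L / A + 1) * (L / A + 1)) hfib
  exact this.trans (Nat.mul_le_mul_left _ hWcard)

/-- the gcd sum -/
theorem gcd_sum_row (M s : ℕ) (hs : 0 < s) :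
    ∑ s' ∈ Icc 1 M, Nat.gcd s s' ≤ s.divisors.card * M := by
  classical
  calc ∑ s' ∈ Icc 1 M, Nat.gcd s s' ≤ ∑ s' ∈ Icc 1 M, ∑ d ∈ s.divisors, if d ∣ s' then d else 0 := by
        refine sum_le_sum fun s' _ => ?_
        have h1 : Nat.gcd s s' ∈ s.divisors := Nat.mem_divisors.2 ⟨Nat.gcd_dvd_left _ _, hs.ne'⟩
        refine le_trans ?_ (single_le_sum (f := fun d => if d ∣ s' then d else 0) (fun _ _ => Nat.zero_le _) h1)
        simp [Nat.gcd_dvd_right]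
    _ = ∑ d ∈ s.divisors, ∑ s' ∈ Icc 1 M, if d ∣ s' then d else 0 := sum_comm
    _ ≤ ∑ d ∈ s.divisors, M := by
        refine sum_le_sum fun d hd => ?_
        rw [← sum_filter, sum_const, smul_eq_mul]
        have : #{s' ∈ Icc 1 M | d ∣ s'} = M / d := by
          have := Nat.Ioc_filter_dvd_card_eq_div M d
          rwa [show Ioc 0 M = Icc 1 M from rfl] at this
        rw [this]
        exact Nat.div_mul_le_self _ _
    _ = _ := by simp

theorem gcd_sum (A H T : ℕ) (hA : 0 < A) (hH : 0 < H) (hT : ∀ s ∈ Icc 1 (4 * (A * H)), s.divisors.card ≤ T) :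
    ∑ x ∈ Ico A (2 * A) ×ˢ Ico H (2 * H), ∑ x' ∈ Ico A (2 * A) ×ˢ Ico H (2 * H),
      Nat.gcd (x.1 * x.2) (x'.1 * x'.2) ≤ T ^ 3 * (4 * (A * H)) ^ 2 := by
  classical
  set M := 4 * (A * H) with hM
  set P := Ico A (2 * A) ×ˢ Ico H (2 * H) with hP
  have hmaps : ∀ x ∈ P, x.1 * x.2 ∈ Icc 1 M := by
    intro x hx
    simp only [hP, mem_product, mem_Ico] at hx
    rw [mem_Icc]
    refine ⟨Nat.mul_pos (by omega) (by omega), ?_⟩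
    rw [hM]
    exact (Nat.mul_le_mul hx.1.2.le hx.2.2.le).trans (by ring_nf; exact le_rfl)
  have hpush : ∀ F : ℕ → ℕ, ∑ x ∈ P, F (x.1 * x.2) ≤ T * ∑ s ∈ Icc 1 M, F s := by
    intro F
    rw [← sum_fiberwise_of_maps_to hmaps, mul_sum]
    refine sum_le_sum fun s hs => ?_
    rw [sum_congr rfl (g := fun _ => F s) (fun x hx => by rw [(mem_filter.1 hx).2]), sum_const, smul_eq_mul]
    refine Nat.mul_le_mul_right _ (le_trans ?_ (hT s hs))
    refine card_le_card_of_injOn (fun x => x.1) ?_ ?_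
    · intro x hx
      have hx2 := (mem_filter.1 hx).2
      have := (mem_Icc.1 hs).1
      simp only [coe_filter, SetLike.mem_coe, Nat.mem_divisors]
      exact ⟨⟨x.2, hx2.symm⟩, by omega⟩
    · intro x hx y hy hxy
      obtain ⟨hx1, hx2⟩ := mem_filter.1 hx
      obtain ⟨hy1, hy2⟩ := mem_filter.1 hy
      simp only [hP, mem_product, mem_Ico] at hx1
      simp only at hxy
      refine Prod.ext hxy ?_
      rw [← hy2, ← hxy] at hx2
      exact Nat.eq_of_mul_eq_mul_left (by omega) hx2
  calc _ ≤ ∑ x ∈ P, T * ∑ s' ∈ Icc 1 M, Nat.gcd (x.1 * x.2) s' := by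
        exact sum_le_sum fun x _ => hpush (fun s' => Nat.gcd (x.1 * x.2) s')
    _ ≤ T * ∑ s ∈ Icc 1 M, T * ∑ s' ∈ Icc 1 M, Nat.gcd s s' :=
        hpush (fun s => T * ∑ s' ∈ Icc 1 M, Nat.gcd s s')
    _ ≤ T * ∑ s ∈ Icc 1 M, T * (T * M) := by
        gcongr with s hs
        refine (gcd_sum_row M s (mem_Icc.1 hs).1).trans ?_
        exact Nat.mul_le_mul_right _ (hT s hs)
    _ = _ := by simp; ring

theorem energy_bound {p : ℕ} [Fact p.Prime] (A B L H T : ℕ) (b0 v0 : ZMod p)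
    (hA : 0 < A) (hH : 0 < H) (hHB : H ≤ B) (hL : L ≤ A * B) (hp : 24 * (A * B) ^ 2 < p)
    (hT : ∀ s ∈ Icc 1 (4 * (A * H)), s.divisors.card ≤ T) :
    ((∑ x ∈ Ico A (2 * A) ×ˢ Ico H (2 * H), ∑ x' ∈ Ico A (2 * A) ×ˢ Ico H (2 * H),
      #{yy ∈ (range B ×ˢ range L) ×ˢ (range B ×ˢ range L) |
      ((x.1 : ZMod p) * (b0 + yy.1.1) - (v0 + yy.1.2)) / (x.1 * x.2) =
      ((x'.1 : ZMod p) * (b0 + yy.2.1) - (v0 + yy.2.2)) / (x'.1 * x'.2)} : ℕ) : ℝ) ≤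
    64 * T ^ 3 * (L + A) ^ 2 * B * H := by
  have hAr : (0 : ℝ) < A := by exact_mod_cast hA
  have hHr : (0 : ℝ) < H := by exact_mod_cast hH
  have hg := gcd_sum A H T hA hH hT
  have hg' : ((∑ x ∈ Ico A (2 * A) ×ˢ Ico H (2 * H), ∑ x' ∈ Ico A (2 * A) ×ˢ Ico H (2 * H),
      Nat.gcd (x.1 * x.2) (x'.1 * x'.2) : ℕ) : ℝ) ≤ T ^ 3 * (4 * (A * H)) ^ 2 := by exact_mod_cast hg
  push_cast at hg' ⊢
  set c : ℝ := ((L : ℝ) / A + 1) * (L / A + 1) * (4 * B / H) with hc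
  have hc0 : 0 ≤ c := by positivity
  have hterm : ∀ x ∈ Ico A (2 * A) ×ˢ Ico H (2 * H), ∀ x' ∈ Ico A (2 * A) ×ˢ Ico H (2 * H),
      ((#{yy ∈ (range B ×ˢ range L) ×ˢ (range B ×ˢ range L) |
      ((x.1 : ZMod p) * (b0 + yy.1.1) - (v0 + yy.1.2)) / (x.1 * x.2) =
      ((x'.1 : ZMod p) * (b0 + yy.2.1) - (v0 + yy.2.2)) / (x'.1 * x'.2)} : ℕ) : ℝ) ≤
      c * (Nat.gcd (x.1 * x.2) (x'.1 * x'.2) : ℝ) := by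
    intro x hx x' hx'
    rw [mem_product] at hx hx'
    have h1 := energy_fixed A B L H x.1 x'.1 x.2 x'.2 b0 v0 hA hH hHB hL hp hx.1 hx'.1 hx.2 hx'.2
    have h1' := (Nat.cast_le (α := ℝ)).2 h1
    refine h1'.trans ?_
    obtain ⟨a, h⟩ := x
    obtain ⟨a', h'⟩ := x'
    simp only [mem_Ico] at hx hx' ⊢
    set s := a * h with hs
    set g := Nat.gcd s (a' * h') with hgdef
    have hspos : 0 < s := Nat.mul_pos (by omega) (by omega)
    have hgpos : 0 < g := Nat.gcd_pos_of_pos_left _ hspos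
    have hgd : g ∣ s := Nat.gcd_dvd_left _ _
    have hgr : (1 : ℝ) ≤ g := by exact_mod_cast hgpos
    have hsr : (A : ℝ) * H ≤ s := by rw [hs]; push_cast; gcongr <;> [exact_mod_cast hx.1.1; exact_mod_cast hx.2.1]
    have hspr : (0 : ℝ) < s := by positivity
    have e1 : ((L / A : ℕ) : ℝ) ≤ (L : ℝ) / A := Nat.cast_div_le
    have e2 : ((3 * (A * B) / (s / g) : ℕ) : ℝ) + 1 ≤ 4 * B / H * g := by
      have h3 : ((3 * (A * B) / (s / g) : ℕ) : ℝ) ≤ 3 * (A * B) / (s / g) := by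
        refine Nat.cast_div_le.trans ?_
        rw [Nat.cast_div hgd (by positivity)]
        push_cast; exact le_rfl
      have h4 : 3 * ((A : ℝ) * B) / (s / g) ≤ 3 * B / H * g := by
        rw [div_div_eq_mul_div, div_le_iff₀ hspr]
        calc 3 * ((A : ℝ) * B) * g = 3 * B / H * g * (A * H) := by field_simp
          _ ≤ 3 * B / H * g * s := by gcongr
      have h5 : (1 : ℝ) ≤ B / H * g := by
        have : (1 : ℝ) ≤ B / H := by rw [one_le_div hHr]; exact_mod_cast hHB
        nlinarith
      calc ((3 * (A * B) / (s / g) : ℕ) : ℝ) + 1 ≤ 3 * (B : ℝ) / H * g + (B : ℝ) / H * g := by linarith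
        _ = 4 * (B : ℝ) / H * g := by ring
    push_cast
    calc _ ≤ ((L : ℝ) / A + 1) * (L / A + 1) * (4 * B / H * g) := by
          push_cast at e2
          gcongr
      _ = _ := by rw [hc]; ring
  calc _ ≤ ∑ x ∈ Ico A (2 * A) ×ˢ Ico H (2 * H), ∑ x' ∈ Ico A (2 * A) ×ˢ Ico H (2 * H),
      c * (Nat.gcd (x.1 * x.2) (x'.1 * x'.2) : ℝ) := sum_le_sum fun x hx => sum_le_sum fun x' hx' => hterm x hx x' hx'
    _ = c * ∑ x ∈ Ico A (2 * A) ×ˢ Ico H (2 * H), ∑ x' ∈ Ico A (2 * A) ×ˢ Ico H (2 * H),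
      (Nat.gcd (x.1 * x.2) (x'.1 * x'.2) : ℝ) := by simp_rw [← mul_sum]
    _ ≤ c * (T ^ 3 * (4 * (A * H)) ^ 2) := by gcongr
    _ = _ := by rw [hc]; field_simp; ring


theorem holder_energy {ι : Type} {G : Type} [Fintype G] [DecidableEq G] [DecidableEq ι] (T : Finset ι) (lam : ι → G)
    (f : G → ℝ) (hf : ∀ x, 0 ≤ f x) (r : ℕ) (hr : 1 ≤ r) :
    (∑ t ∈ T, f (lam t)) ^ (2 * r) ≤ (#T : ℝ) ^ (2 * r - 2) *
      (∑ t ∈ T, ∑ t' ∈ T, if lam t = lam t' then (1 : ℝ) else 0) * ∑ x, f x ^ (2 * r) := by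
  obtain ⟨n, rfl⟩ : ∃ n, r = n + 1 := ⟨r - 1, by omega⟩
  have h1 : (∑ t ∈ T, f (lam t)) ^ (n + 1) ≤ (#T : ℝ) ^ n * ∑ t ∈ T, f (lam t) ^ (n + 1) := by
    exact pow_sum_le_card_mul_sum_pow (fun t _ => hf _) n
  have h2 : ∑ t ∈ T, f (lam t) ^ (n + 1) = ∑ x, (∑ t ∈ T, if lam t = x then (1 : ℝ) else 0) * f x ^ (n + 1) := by
    simp_rw [sum_mul]
    rw [sum_comm]
    refine sum_congr rfl fun t _ => ?_
    simp
  have h3 : (∑ t ∈ T, f (lam t) ^ (n + 1)) ^ 2 ≤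
      (∑ x, (∑ t ∈ T, if lam t = x then (1 : ℝ) else 0) ^ 2) * ∑ x, (f x ^ (n + 1)) ^ 2 := by
    rw [h2]
    exact sum_mul_sq_le_sq_mul_sq _ _ _
  have h4 : (∑ x, (∑ t ∈ T, if lam t = x then (1 : ℝ) else 0) ^ 2) =
      ∑ t ∈ T, ∑ t' ∈ T, if lam t = lam t' then (1 : ℝ) else 0 := by
    simp_rw [sq, sum_mul_sum]
    rw [sum_comm]
    refine sum_congr rfl fun t _ => ?_
    rw [sum_comm]
    refine sum_congr rfl fun t' _ => ?_
    simp [eq_comm]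
  rw [h4] at h3
  have h0 : 0 ≤ ∑ t ∈ T, f (lam t) := sum_nonneg fun t _ => hf _
  calc (∑ t ∈ T, f (lam t)) ^ (2 * (n + 1)) = ((∑ t ∈ T, f (lam t)) ^ (n + 1)) ^ 2 := by rw [← pow_mul]; ring
    _ ≤ ((#T : ℝ) ^ n * ∑ t ∈ T, f (lam t) ^ (n + 1)) ^ 2 := by gcongr
    _ = (#T : ℝ) ^ (2 * n) * (∑ t ∈ T, f (lam t) ^ (n + 1)) ^ 2 := by rw [mul_pow, ← pow_mul]; ring
    _ ≤ (#T : ℝ) ^ (2 * n) * ((∑ t ∈ T, ∑ t' ∈ T, if lam t = lam t' then (1 : ℝ) else 0) * ∑ x, (f x ^ (n + 1)) ^ 2) := by gcongr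
    _ = _ := by
      rw [← mul_assoc]
      congr 1
      refine sum_congr rfl fun x _ => ?_
      rw [← pow_mul]; ring

theorem shift_bound (F : ℕ → ℂ) (hF : ∀ n, ‖F n‖ ≤ 1) (B m : ℕ) :
    ‖∑ β ∈ range B, F β - ∑ β ∈ range B, F (β + m)‖ ≤ 2 * m := by
  have h1 := sum_range_add F B m
  have h2 := sum_range_add F m B
  rw [add_comm m B, h1] at h2
  have h3 : ∑ β ∈ range B, F β - ∑ β ∈ range B, F (β + m) = ∑ x ∈ range m, F x - ∑ x ∈ range m, F (B + x) := by
    simp_rw [add_comm _ m]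
    linear_combination h2
  rw [h3]
  have h4 : ‖∑ x ∈ range m, F x‖ ≤ m := by
    refine (norm_sum_le _ _).trans ((sum_le_sum fun x _ => hF _).trans ?_); simp
  have h5 : ‖∑ x ∈ range m, F (B + x)‖ ≤ m := by
    refine (norm_sum_le _ _).trans ((sum_le_sum fun x _ => hF _).trans ?_); simp
  linarith [norm_sub_le (∑ x ∈ range m, F x) (∑ x ∈ range m, F (B + x))]

theorem main_D1 {p : ℕ} [Fact p.Prime] (hp3 : 3 ≤ p) (χ : MulChar (ZMod p) ℂ) (hχ : χ ≠ 1)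
    (A B L H K T r : ℕ) (b0 v0 : ZMod p)
    (hA : 0 < A) (hH : 0 < H) (hHB : H ≤ B) (hL : L ≤ A * B) (hp : 24 * (A * B) ^ 2 < p)
    (hT : ∀ s ∈ Icc 1 (4 * (A * H)), s.divisors.card ≤ T) (hK : 0 < K) (hKp : K ≤ p) (hr : 1 ≤ r) :
    ∃ W : ℝ, 0 ≤ W ∧
      (H : ℝ) * K * (∑ a ∈ Ico A (2 * A), ∑ ν ∈ range L,
        ‖∑ β ∈ range B, χ (a * (b0 + β) - (v0 + ν))‖) ≤ W + 4 * A * L * H ^ 2 * K ^ 2 ∧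
      W ^ (2 * r) ≤ ((A : ℝ) * B * L * H) ^ (2 * r - 2) * (64 * T ^ 3 * (L + A) ^ 2 * B * H) *
        (r ^ (2 * r) * K ^ r * p + 2 * r * K ^ (2 * r) * Real.sqrt p) := by
  classical
  have hB : 0 < B := by omega
  have hAB1 : A ≤ A * B := Nat.le_mul_of_pos_right A hB
  have hAB2 : B ≤ A * B := Nat.le_mul_of_pos_left B hA
  have hAB3 : A * B ≤ (A * B) ^ 2 := Nat.le_self_pow (by norm_num) _
  have h2A : 2 * A < p := by omega
  have h2H : 2 * H < p := by omega
  have hne : ∀ n : ℕ, 0 < n → n < p → (n : ZMod p) ≠ 0 := by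
    intro n h0 h1 h2
    rw [ZMod.natCast_eq_zero_iff] at h2
    exact absurd (Nat.le_of_dvd h0 h2) (by omega)
  have hχ1 : ∀ c : ZMod p, ‖χ c‖ ≤ 1 := fun c => DirichletCharacter.norm_le_one χ c
  set P := Ico A (2 * A) ×ˢ Ico H (2 * H) with hP
  set Q := range B ×ˢ range L with hQ
  set lam : (ℕ × ℕ) × (ℕ × ℕ) → ZMod p := fun t =>
    ((t.1.1 : ZMod p) * (b0 + t.2.1) - (v0 + t.2.2)) / (t.1.1 * t.1.2) with hlam
  set f : ZMod p → ℝ := fun x => ‖∑ k ∈ range K, χ (x + k)‖ with hf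
  have hf0 : ∀ x, 0 ≤ f x := fun x => norm_nonneg _
  refine ⟨∑ t ∈ P ×ˢ Q, f (lam t), sum_nonneg fun t _ => hf0 _, ?_, ?_⟩
  · have hpoint : ∀ a ∈ Ico A (2 * A), ∀ ν ∈ range L, ∀ h ∈ Ico H (2 * H),
        (K : ℝ) * ‖∑ β ∈ range B, χ (a * (b0 + β) - (v0 + ν))‖ ≤
          ∑ β ∈ range B, f (lam ((a, h), (β, ν))) + 4 * H * K ^ 2 := by
      intro a ha ν hν h hh
      rw [mem_Ico] at ha hh
      have ha0 := hne a (by omega) (by omega)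
      have hh0 := hne h (by omega) (by omega)
      set F : ℕ → ℂ := fun β => χ (a * (b0 + β) - (v0 + ν)) with hF
      have h1 : ∀ β : ℕ, ‖∑ k ∈ range K, F (β + h * k)‖ ≤ f (lam ((a, h), (β, ν))) := by
        intro β
        have : ∀ k ∈ range K, F (β + h * k) = χ (a * h) * χ (lam ((a, h), (β, ν)) + k) := by
          intro k _
          rw [← map_mul]
          simp only [hF, hlam]
          congr 1
          push_cast
          field_simp
          ring
        rw [sum_congr rfl this, ← mul_sum, norm_mul]
        calc _ ≤ 1 * ‖∑ k ∈ range K, χ (lam ((a, h), (β, ν)) + k)‖ := by gcongr; exact hχ1 _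
          _ = _ := by rw [one_mul]
      have h2 : (K : ℂ) * ∑ β ∈ range B, F β = ∑ β ∈ range B, ∑ k ∈ range K, F (β + h * k) +
          ∑ k ∈ range K, (∑ β ∈ range B, F β - ∑ β ∈ range B, F (β + h * k)) := by
        rw [sum_comm, sum_sub_distrib]
        simp
      have h3 : ‖(K : ℂ) * ∑ β ∈ range B, F β‖ = K * ‖∑ β ∈ range B, F β‖ := by
        rw [norm_mul, Complex.norm_natCast]
      rw [← h3, h2]
      refine (norm_add_le _ _).trans (add_le_add ?_ ?_)
      · exact (norm_sum_le _ _).trans (sum_le_sum fun β _ => h1 β)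
      · refine (norm_sum_le _ _).trans ?_
        refine (sum_le_card_nsmul _ _ (4 * H * K : ℝ) fun k hk => ?_).trans (le_of_eq ?_)
        · refine (shift_bound F (fun n => hχ1 _) B (h * k)).trans ?_
          rw [mem_range] at hk
          have : h * k ≤ 2 * H * K := Nat.mul_le_mul hh.2.le hk.le
          have h' : ((h * k : ℕ) : ℝ) ≤ ((2 * H * K : ℕ) : ℝ) := by exact_mod_cast this
          push_cast at h' ⊢
          linarith
        · rw [card_range, nsmul_eq_mul]; ring
    have hsum : ∑ t ∈ P ×ˢ Q, f (lam t) = ∑ a ∈ Ico A (2 * A), ∑ ν ∈ range L, ∑ h ∈ Ico H (2 * H),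
        ∑ β ∈ range B, f (lam ((a, h), (β, ν))) := by
      rw [sum_product, hP, sum_product]
      refine sum_congr rfl fun a _ => ?_
      conv_rhs => rw [sum_comm]
      refine sum_congr rfl fun h _ => ?_
      rw [hQ, sum_product, sum_comm]
    rw [hsum, mul_sum]
    have hconst : (4 : ℝ) * A * L * H ^ 2 * K ^ 2 = ∑ a ∈ Ico A (2 * A), ∑ ν ∈ range L, ∑ h ∈ Ico H (2 * H),
        (4 * H * K ^ 2 : ℝ) := by
      simp only [sum_const, Nat.card_Ico, card_range, nsmul_eq_mul]
      rw [show 2 * A - A = A by omega, show 2 * H - H = H by omega]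
      ring
    rw [hconst, ← sum_add_distrib]
    refine sum_le_sum fun a ha => ?_
    rw [mul_sum, ← sum_add_distrib]
    refine sum_le_sum fun ν hν => ?_
    rw [← sum_add_distrib]
    refine le_trans (le_of_eq ?_) (sum_le_sum fun h hh => hpoint a ha ν hν h hh)
    rw [sum_const, Nat.card_Ico, show 2 * H - H = H by omega, nsmul_eq_mul]; ring
  · have h1 := holder_energy (P ×ˢ Q) lam f hf0 r hr
    have hcard : (#(P ×ˢ Q) : ℝ) = (A : ℝ) * B * L * H := by
      simp only [hP, hQ, card_product, Nat.card_Ico, card_range]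
      rw [show 2 * A - A = A by omega, show 2 * H - H = H by omega]
      push_cast; ring
    have hE : (∑ t ∈ P ×ˢ Q, ∑ t' ∈ P ×ˢ Q, if lam t = lam t' then (1 : ℝ) else 0) ≤ 64 * T ^ 3 * (L + A) ^ 2 * B * H := by
      refine le_trans (le_of_eq ?_) (energy_bound A B L H T b0 v0 hA hH hHB hL hp hT)
      push_cast
      rw [sum_product]
      refine sum_congr rfl fun x _ => ?_
      rw [sum_congr rfl fun y _ => sum_product _ _ _, sum_comm]
      refine sum_congr rfl fun x' _ => ?_
      rw [card_filter, Nat.cast_sum, sum_product (range B ×ˢ range L)]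
      refine sum_congr rfl fun y _ => sum_congr rfl fun y' _ => ?_
      simp only [hlam]
      push_cast
      rfl
    have hM := moment_bound hp3 χ hχ r K hK hKp
    rw [hcard] at h1
    refine h1.trans ?_
    gcongr
    


theorem divisor_bound (ε : ℝ) (hε : 0 < ε) : ∃ C : ℝ, 1 ≤ C ∧ ∀ n : ℕ, 0 < n → (n.divisors.card : ℝ) ≤ C * (n : ℝ) ^ ε := by
  set P0 : ℕ := ⌈(2 : ℝ) ^ (1 / ε)⌉₊ with hP0
  set c : ℝ := max 1 (1 / (ε * Real.log 2)) with hc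
  have hl2 : 0 < Real.log 2 := Real.log_pos (by norm_num)
  have hc1 : 1 ≤ c := le_max_left _ _
  have hc2 : 1 / (ε * Real.log 2) ≤ c := le_max_right _ _
  have hcl : 1 ≤ c * (ε * Real.log 2) := by
    rwa [div_le_iff₀ (by positivity)] at hc2
  refine ⟨c ^ P0, one_le_pow₀ hc1, fun n hn => ?_⟩
  rw [Nat.card_divisors hn.ne']
  have hn' : (n : ℝ) ^ ε = ∏ q ∈ n.primeFactors, ((q : ℝ) ^ ε) ^ (n.factorization q) := by
    conv_lhs => rw [← Nat.prod_factorization_pow_eq_self hn.ne']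
    rw [Finsupp.prod, Nat.support_factorization]
    push_cast
    rw [← Real.finsetProd_rpow _ _ (fun i _ => by positivity)]
    refine prod_congr rfl fun q _ => ?_
    rw [← Real.rpow_natCast, ← Real.rpow_natCast, ← Real.rpow_mul (by positivity), ← Real.rpow_mul (by positivity), mul_comm]
  set g : ℕ → ℝ := fun q => if q < P0 then c else 1 with hg
  have h1 : ∀ q ∈ n.primeFactors, ((n.factorization q + 1 : ℕ) : ℝ) ≤ g q * ((q : ℝ) ^ ε) ^ (n.factorization q) := by
    intro q hq
    set v := n.factorization q
    have hq2 : (2 : ℝ) ≤ q := by exact_mod_cast (Nat.prime_of_mem_primeFactors hq).two_le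
    simp only [hg]
    split_ifs with hlt
    · have h2 : 1 + ε * Real.log 2 * v ≤ ((q : ℝ) ^ ε) ^ v := by
        have h3 : 1 + v * (ε * Real.log 2) ≤ (1 + ε * Real.log 2) ^ v :=
          one_add_mul_le_pow (by nlinarith [mul_pos hε hl2]) v
        have h4 : 1 + ε * Real.log 2 ≤ (q : ℝ) ^ ε := by
          calc 1 + ε * Real.log 2 ≤ Real.exp (ε * Real.log 2) := by linarith [Real.add_one_le_exp (ε * Real.log 2)]
            _ = (2 : ℝ) ^ ε := by rw [Real.rpow_def_of_pos (by norm_num), mul_comm]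
            _ ≤ _ := by gcongr
        calc _ = 1 + v * (ε * Real.log 2) := by ring
          _ ≤ _ := h3
          _ ≤ _ := by gcongr
      push_cast
      have hv : (0 : ℝ) ≤ v := by positivity
      calc (v : ℝ) + 1 ≤ c * (1 + ε * Real.log 2 * v) := by nlinarith
        _ ≤ _ := by gcongr
    · push Not at hlt
      have h2 : (2 : ℝ) ≤ (q : ℝ) ^ ε := by
        have h3 : (2 : ℝ) ^ (1 / ε) ≤ q := (Nat.le_ceil _).trans (by exact_mod_cast hlt)
        calc (2 : ℝ) = ((2 : ℝ) ^ (1 / ε)) ^ ε := by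
              rw [← Real.rpow_mul (by norm_num)]; field_simp; simp
          _ ≤ _ := by gcongr
      rw [one_mul]
      have h3 : ((v + 1 : ℕ) : ℝ) ≤ 2 ^ v := by exact_mod_cast Nat.lt_two_pow_self
      exact h3.trans (by gcongr)
  push_cast at h1 ⊢
  calc _ ≤ ∏ q ∈ n.primeFactors, g q * ((q : ℝ) ^ ε) ^ (n.factorization q) :=
        prod_le_prod (fun q _ => by positivity) h1
    _ = (∏ q ∈ n.primeFactors, g q) * (n : ℝ) ^ ε := by rw [prod_mul_distrib, hn']
    _ ≤ _ := by
        gcongr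
        simp only [hg]
        rw [prod_ite, prod_const, prod_const_one, mul_one]
        apply pow_le_pow_right₀ hc1
        calc _ ≤ #(range P0) := card_le_card fun q hq => by
              rw [mem_range]; exact (mem_filter.1 hq).2
          _ = P0 := card_range _


set_option maxHeartbeats 1000000 in
theorem main_D2 (δ : ℝ) (hδ : 0 < δ) (hδ1 : δ ≤ 1) : ∃ κ : ℝ, 0 < κ ∧ κ ≤ δ ∧ ∃ C : ℝ, 1 ≤ C ∧
    ∀ (p : ℕ) [Fact p.Prime] (χ : MulChar (ZMod p) ℂ), χ ≠ 1 → ∀ (A B L : ℕ) (b0 v0 : ZMod p),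
      0 < A → 0 < L → L ≤ A * B → 24 * (A * B) ^ 2 < p → (p : ℝ) ^ δ ≤ B →
      (p : ℝ) ^ (1 / 4 + δ) ≤ A * B → (p : ℝ) ^ (1 / 4 + δ) ≤ B * L →
      ∑ a ∈ Ico A (2 * A), ∑ ν ∈ range L, ‖∑ β ∈ range B, χ (a * (b0 + β) - (v0 + ν))‖ ≤
        C * A * B * L * (p : ℝ) ^ (-κ) := by
  set ε := δ / 5 with hε
  have hε0 : 0 < ε := by positivity
  obtain ⟨C1, hC1, hdiv⟩ := divisor_bound ε hε0
  set r : ℕ := ⌈5 / (2 * δ)⌉₊ + 3 with hr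
  have hr1 : 5 / (2 * δ) ≤ r := by
    rw [hr]; push_cast; linarith [Nat.le_ceil (5 / (2 * δ))]
  have hr3 : 3 ≤ r := by omega
  have hr3' : (3 : ℝ) ≤ r := by exact_mod_cast hr3
  set C2 : ℝ := 512 * C1 ^ 3 * (r ^ (2 * r) * 2 ^ r + 2 * r) with hC2
  have hC2pos : 1 ≤ C2 := by
    have h1 : (1 : ℝ) ≤ C1 ^ 3 := one_le_pow₀ hC1
    have h2 : (0 : ℝ) ≤ (r : ℝ) ^ (2 * r) * 2 ^ r := by positivity
    rw [hC2]
    nlinarith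
  refine ⟨δ / (2 * r), by positivity, ?_, C2 + 4, by linarith, ?_⟩
  · rw [div_le_iff₀ (by positivity)]; nlinarith
  intro p _ χ hχ A B L b0 v0 hA hL hLAB hp hB hAB hBL
  have hprime : p.Prime := Fact.out
  have hp1 : (1 : ℝ) ≤ p := by exact_mod_cast hprime.one_le
  have hp0 : (0 : ℝ) < p := by linarith
  set y : ℝ := (p : ℝ) ^ ε with hy
  set z : ℝ := (p : ℝ) ^ ((1 : ℝ) / 4) with hz
  have hy1 : 1 ≤ y := Real.one_le_rpow hp1 hε0.le
  have hy0 : 0 < y := by linarith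
  have hz1 : 1 ≤ z := Real.one_le_rpow hp1 (by norm_num)
  have hz0 : 0 < z := by linarith
  have hyδ : (p : ℝ) ^ δ = y ^ 5 := by
    rw [hy, ← Real.rpow_natCast, ← Real.rpow_mul hp0.le]; congr 1; rw [hε]; push_cast; ring
  have hzy : (p : ℝ) ^ (1 / 4 + δ) = z * y ^ 5 := by rw [Real.rpow_add hp0, hyδ]
  have hsq : Real.sqrt p = z ^ 2 := by
    rw [hz, ← Real.rpow_natCast, ← Real.rpow_mul hp0.le, Real.sqrt_eq_rpow]; congr 1; norm_num
  have hpz : (p : ℝ) = z ^ 2 * z ^ 2 := by rw [← hsq, Real.mul_self_sqrt hp0.le]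
  have hzr : z ^ 2 ≤ y ^ r := by
    rw [← hsq, hy, ← Real.rpow_natCast, ← Real.rpow_mul hp0.le, Real.sqrt_eq_rpow]
    apply Real.rpow_le_rpow_of_exponent_le hp1
    rw [div_le_iff₀ (by positivity)] at hr1
    rw [hε]; linarith
  rw [hyδ] at hB
  rw [hzy] at hAB hBL
  -- B positive
  have hy5 : 1 ≤ y ^ 5 := one_le_pow₀ hy1
  have hBr : (1 : ℝ) ≤ B := by linarith
  have hB0 : 0 < B := by
    have : (0 : ℝ) < B := by linarith
    exact_mod_cast this
  have hAr : (1 : ℝ) ≤ A := by exact_mod_cast hA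
  have hLr : (1 : ℝ) ≤ L := by exact_mod_cast hL
  have hAB1 : 0 < A * B := Nat.mul_pos hA hB0
  have hAB3 : A * B ≤ (A * B) ^ 2 := Nat.le_self_pow (by norm_num) _
  have hp3 : 3 ≤ p := by omega
  -- K
  set K : ℕ := ⌊y⌋₊ with hK
  have hK0 : 0 < K := Nat.floor_pos.2 hy1
  have hKy : (K : ℝ) ≤ y := Nat.floor_le hy0.le
  have hyK : y ≤ 2 * K := by
    have h1 := Nat.lt_floor_add_one y
    have h2 : (1 : ℝ) ≤ K := by exact_mod_cast hK0
    linarith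
  have hyp : y ≤ p := by
    calc y ≤ (p : ℝ) ^ (1 : ℝ) := Real.rpow_le_rpow_of_exponent_le hp1 (by rw [hε]; linarith)
      _ = p := Real.rpow_one _
  have hKp : K ≤ p := by exact_mod_cast hKy.trans hyp
  -- H
  set H : ℕ := ⌊(B : ℝ) / y ^ 2⌋₊ with hH
  have hBy : 1 ≤ (B : ℝ) / y ^ 2 := by
    rw [one_le_div (by positivity)]
    exact (pow_le_pow_right₀ hy1 (by norm_num)).trans hB
  have hH0 : 0 < H := Nat.floor_pos.2 hBy
  have hHy : (H : ℝ) ≤ B / y ^ 2 := Nat.floor_le (by positivity)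
  have hyH : (B : ℝ) / y ^ 2 ≤ 2 * H := by
    have h1 := Nat.lt_floor_add_one ((B : ℝ) / y ^ 2)
    have h2 : (1 : ℝ) ≤ H := by exact_mod_cast hH0
    linarith
  have hHB : H ≤ B := by
    have : (H : ℝ) ≤ B := hHy.trans (div_le_self (by positivity) (one_le_pow₀ hy1))
    exact_mod_cast this
  have hHr : (1 : ℝ) ≤ H := by exact_mod_cast hH0
  have hKr : (1 : ℝ) ≤ K := by exact_mod_cast hK0
  -- T
  set T : ℕ := ⌊C1 * y⌋₊ with hT
  have hTy : (T : ℝ) ≤ C1 * y := Nat.floor_le (by positivity)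
  have hTd : ∀ s ∈ Icc 1 (4 * (A * H)), s.divisors.card ≤ T := by
    intro s hs
    rw [mem_Icc] at hs
    apply Nat.le_floor
    refine (hdiv s (by omega)).trans ?_
    have : A * H ≤ A * B := Nat.mul_le_mul_left _ hHB
    have hsp : (s : ℝ) ≤ p := by exact_mod_cast (by omega : s ≤ p)
    exact mul_le_mul_of_nonneg_left (Real.rpow_le_rpow (by positivity) hsp hε0.le) (by linarith)
  obtain ⟨W, hW0, hW1, hW2⟩ := main_D1 hp3 χ hχ A B L H K T r b0 v0 hA hH0 hHB hLAB hp hTd hK0 hKp (by omega)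
  set X := ∑ a ∈ Ico A (2 * A), ∑ ν ∈ range L, ‖∑ β ∈ range B, χ (a * (b0 + β) - (v0 + ν))‖ with hX
  set N : ℝ := (A : ℝ) * B * L * H with hN
  have hNpos : 0 < N := by positivity
  have hM : (r : ℝ) ^ (2 * r) * K ^ r * p + 2 * r * K ^ (2 * r) * Real.sqrt p ≤
      K ^ (2 * r) * z ^ 2 * (r ^ (2 * r) * 2 ^ r + 2 * r) := by
    have h1 : (K : ℝ) ^ r * p ≤ 2 ^ r * K ^ (2 * r) * z ^ 2 := by
      have h2 : z ^ 2 ≤ (2 * K) ^ r := hzr.trans (by gcongr)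
      rw [hpz]
      calc (K : ℝ) ^ r * (z ^ 2 * z ^ 2) ≤ (K : ℝ) ^ r * ((2 * K) ^ r * z ^ 2) := by gcongr
        _ = _ := by rw [mul_pow, two_mul r, pow_add]; ring
    rw [hsq]
    have h3 : (0 : ℝ) ≤ (r : ℝ) ^ (2 * r) := by positivity
    have h4 := mul_le_mul_of_nonneg_left h1 h3
    calc _ = (r : ℝ) ^ (2 * r) * (K ^ r * p) + 2 * r * K ^ (2 * r) * z ^ 2 := by ring
      _ ≤ (r : ℝ) ^ (2 * r) * (2 ^ r * K ^ (2 * r) * z ^ 2) + 2 * r * K ^ (2 * r) * z ^ 2 :=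
        add_le_add h4 le_rfl
      _ = _ := by ring
  have hE : 64 * (T : ℝ) ^ 3 * (L + A) ^ 2 * B * H * z ^ 2 * y ^ 5 ≤ N ^ 2 * (512 * C1 ^ 3) := by
    have h1 : ((L : ℝ) + A) * (z * y ^ 5) ≤ 2 * (A * L * B) := by
      have e1 : (L : ℝ) * (z * y ^ 5) ≤ L * (A * B) := by gcongr
      have e2 : (A : ℝ) * (z * y ^ 5) ≤ A * (B * L) := by gcongr
      linarith
    have h2 : (((L : ℝ) + A) * (z * y ^ 5)) ^ 2 ≤ (2 * (A * L * B)) ^ 2 := by gcongr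
    have h3 : (T : ℝ) ^ 3 ≤ (C1 * y) ^ 3 := by gcongr
    have h4 : (B : ℝ) ≤ 2 * H * y ^ 2 := by
      rwa [div_le_iff₀ (by positivity)] at hyH
    have h5 : 64 * (T : ℝ) ^ 3 * (L + A) ^ 2 * z ^ 2 * y ^ 5 * y ^ 2 ≤ 256 * C1 ^ 3 * (A * L * B) ^ 2 := by
      calc 64 * (T : ℝ) ^ 3 * (L + A) ^ 2 * z ^ 2 * y ^ 5 * y ^ 2 ≤ 64 * (C1 * y) ^ 3 * (L + A) ^ 2 * z ^ 2 * y ^ 5 * y ^ 2 := by gcongr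
        _ = 64 * C1 ^ 3 * (((L : ℝ) + A) * (z * y ^ 5)) ^ 2 := by ring
        _ ≤ 64 * C1 ^ 3 * (2 * (A * L * B)) ^ 2 := by gcongr
        _ = _ := by ring
    calc 64 * (T : ℝ) ^ 3 * (L + A) ^ 2 * B * H * z ^ 2 * y ^ 5 
        ≤ 64 * (T : ℝ) ^ 3 * (L + A) ^ 2 * (2 * H * y ^ 2) * H * z ^ 2 * y ^ 5 := by gcongr
      _ = (64 * (T : ℝ) ^ 3 * (L + A) ^ 2 * z ^ 2 * y ^ 5 * y ^ 2) * (2 * H ^ 2) := by ring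
      _ ≤ (256 * C1 ^ 3 * (A * L * B) ^ 2) * (2 * H ^ 2) := by gcongr
      _ = _ := by rw [hN]; ring
  set κ := δ / (2 * r) with hκ
  set t : ℝ := (p : ℝ) ^ (-κ) with ht
  have ht0 : 0 < t := by positivity
  have ht2 : t ^ (2 * r) = (y ^ 5)⁻¹ := by
    rw [ht, ← Real.rpow_natCast, ← Real.rpow_mul hp0.le, ← hyδ, ← Real.rpow_neg hp0.le]
    congr 1
    rw [hκ]; push_cast; field_simp
  have hWle : W ≤ N * K * C2 * t := by
    apply le_of_pow_le_pow_left₀ (n := 2 * r) (by omega) (by positivity)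
    refine hW2.trans ?_
    have hC2r : C2 ≤ C2 ^ (2 * r) := le_self_pow₀ hC2pos (by omega)
    have hE' : 64 * (T : ℝ) ^ 3 * (L + A) ^ 2 * B * H * z ^ 2 ≤ N ^ 2 * (512 * C1 ^ 3) * (y ^ 5)⁻¹ := by
      rw [← div_eq_mul_inv, le_div_iff₀ (by positivity)]; exact hE
    have hNN : N ^ (2 * r - 2) * N ^ 2 = N ^ (2 * r) := by rw [← pow_add, Nat.sub_add_cancel (by omega)]
    calc _ ≤ N ^ (2 * r - 2) * (64 * T ^ 3 * (L + A) ^ 2 * B * H) * (K ^ (2 * r) * z ^ 2 * (r ^ (2 * r) * 2 ^ r + 2 * r)) := by gcongr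
      _ = N ^ (2 * r - 2) * (64 * T ^ 3 * (L + A) ^ 2 * B * H * z ^ 2) * (K ^ (2 * r) * (r ^ (2 * r) * 2 ^ r + 2 * r)) := by ring
      _ ≤ N ^ (2 * r - 2) * (N ^ 2 * (512 * C1 ^ 3) * (y ^ 5)⁻¹) * (K ^ (2 * r) * (r ^ (2 * r) * 2 ^ r + 2 * r)) := by gcongr
      _ = (N ^ (2 * r - 2) * N ^ 2) * K ^ (2 * r) * C2 * (y ^ 5)⁻¹ := by rw [hC2]; ring
      _ = N ^ (2 * r) * K ^ (2 * r) * C2 * t ^ (2 * r) := by rw [hNN, ht2]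
      _ ≤ N ^ (2 * r) * K ^ (2 * r) * C2 ^ (2 * r) * t ^ (2 * r) := by gcongr
      _ = _ := by rw [mul_pow (N * K * C2) t, mul_pow (N * K) C2, mul_pow N (K : ℝ)]
  have hty : y⁻¹ ≤ t := by
    rw [hy, ← Real.rpow_neg hp0.le, ht]
    apply Real.rpow_le_rpow_of_exponent_le hp1
    rw [neg_le_neg_iff, hκ, hε]
    apply div_le_div_of_nonneg_left hδ.le (by norm_num)
    linarith
  have hHK : (H : ℝ) * K ≤ B * t := by
    calc (H : ℝ) * K ≤ (B / y ^ 2) * y := by gcongr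
      _ = B * y⁻¹ := by field_simp
      _ ≤ _ := by gcongr
  have hHKpos : (0 : ℝ) < H * K := by positivity
  have hfin : (H : ℝ) * K * X ≤ H * K * ((C2 + 4) * A * B * L * t) := by
    calc (H : ℝ) * K * X ≤ W + 4 * A * L * H ^ 2 * K ^ 2 := hW1
      _ ≤ N * K * C2 * t + 4 * A * L * (H * K) * (H * K) := by
          have : (4 : ℝ) * A * L * H ^ 2 * K ^ 2 = 4 * A * L * (H * K) * (H * K) := by ring
          linarith
      _ ≤ N * K * C2 * t + 4 * A * L * (H * K) * (B * t) := by gcongr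
      _ = _ := by rw [hN]; ring
  exact le_of_mul_le_mul_left hfin hHKpos


lemma F_prefix (f : ℕ → ℂ) (hf : ∀ n, ‖f n‖ ≤ 1) (B n : ℕ) (hB : 0 < B) :
    ‖∑ b ∈ range n, f b - ∑ j ∈ range (n / B), ∑ β ∈ range B, f (j * B + β)‖ ≤ B := by
  have h1 : ∀ q : ℕ, ∑ b ∈ range (q * B), f b = ∑ j ∈ range q, ∑ β ∈ range B, f (j * B + β) := by
    intro q
    induction q with
    | zero => simp
    | succ k ih => rw [add_mul, one_mul, sum_range_add, ih, sum_range_succ]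
  have h2 : n = (n / B) * B + n % B := by rw [mul_comm]; exact (Nat.div_add_mod n B).symm
  have h3 : ∑ b ∈ range n, f b = ∑ b ∈ range ((n / B) * B), f b
      + ∑ b ∈ range (n % B), f ((n / B) * B + b) := by
    conv_lhs => rw [h2]
    rw [sum_range_add]
  rw [h3, h1, add_sub_cancel_left]
  calc _ ≤ ∑ b ∈ range (n % B), ‖f ((n / B) * B + b)‖ := norm_sum_le _ _
    _ ≤ ∑ b ∈ range (n % B), (1 : ℝ) := sum_le_sum fun b _ => hf _
    _ = ((n % B : ℕ) : ℝ) := by simp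
    _ ≤ B := by exact_mod_cast (Nat.mod_lt _ hB).le

lemma F_blocks (f : ℕ → ℂ) (hf : ∀ n, ‖f n‖ ≤ 1) (B x y J : ℕ) (hB : 0 < B)
    (hJ : (y + 1) / B ≤ J) :
    ‖∑ b ∈ Ioc x y, f b‖ ≤ ∑ j ∈ range J, ‖∑ β ∈ range B, f (j * B + β)‖ + 2 * B := by
  have hn : 0 ≤ ∑ j ∈ range J, ‖∑ β ∈ range B, f (j * B + β)‖ :=
    sum_nonneg fun _ _ => norm_nonneg _
  rcases lt_or_ge y x with h | h
  · rw [Ioc_eq_empty (by omega)]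
    simp only [sum_empty, norm_zero]
    positivity
  set T : ℕ → ℂ := fun j => ∑ β ∈ range B, f (j * B + β) with hT
  have e1 : ∑ b ∈ Ioc x y, f b = ∑ b ∈ range (y + 1), f b - ∑ b ∈ range (x + 1), f b := by
    rw [← sum_Ico_eq_sub _ (by omega)]
    congr 1
    ext b; simp only [mem_Ioc, mem_Ico]; omega
  have e2 : ∑ j ∈ Ico ((x + 1) / B) ((y + 1) / B), T j
      = ∑ j ∈ range ((y + 1) / B), T j - ∑ j ∈ range ((x + 1) / B), T j :=
    sum_Ico_eq_sub _ (Nat.div_le_div_right (by omega))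
  have e3 : ∑ b ∈ Ioc x y, f b = ∑ j ∈ Ico ((x + 1) / B) ((y + 1) / B), T j
      + (∑ b ∈ range (y + 1), f b - ∑ j ∈ range ((y + 1) / B), T j)
      - (∑ b ∈ range (x + 1), f b - ∑ j ∈ range ((x + 1) / B), T j) := by
    rw [e1, e2]; ring
  have p1 := F_prefix f hf B (y + 1) hB
  have p2 := F_prefix f hf B (x + 1) hB
  have p3 : ‖∑ j ∈ Ico ((x + 1) / B) ((y + 1) / B), T j‖ ≤ ∑ j ∈ range J, ‖T j‖ := by
    refine (norm_sum_le _ _).trans (sum_le_sum_of_subset_of_nonneg ?_ fun _ _ _ => norm_nonneg _)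
    intro j hj
    simp only [mem_Ico, mem_range] at hj ⊢
    omega
  rw [e3]
  refine (norm_sub_le _ _).trans ?_
  have := norm_add_le (∑ j ∈ Ico ((x + 1) / B) ((y + 1) / B), T j)
      (∑ b ∈ range (y + 1), f b - ∑ j ∈ range ((y + 1) / B), T j)
  linarith

lemma F_cover (g : ℕ → ℝ) (hg : ∀ n, 0 ≤ g n) (M L I : ℕ) (hI : M < I * L) :
    ∑ v ∈ Icc 1 M, g v ≤ ∑ i ∈ range I, ∑ ν ∈ range L, g (i * L + ν) := by
  have h1 : ∀ q : ℕ, ∑ b ∈ range (q * L), g b = ∑ j ∈ range q, ∑ β ∈ range L, g (j * L + β) := by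
    intro q
    induction q with
    | zero => simp
    | succ k ih => rw [add_mul, one_mul, sum_range_add, ih, sum_range_succ]
  rw [← h1]
  refine sum_le_sum_of_subset_of_nonneg ?_ fun _ _ _ => hg _
  intro j hj
  simp only [mem_Icc, mem_range] at hj ⊢
  omega

lemma F_dyadic (g : ℕ → ℝ) (hg : ∀ n, 0 ≤ g n) (s : ℕ) :
    ∑ a ∈ Icc 1 s, g a ≤ ∑ j ∈ range (Nat.log 2 s + 1), ∑ a ∈ Ico (2 ^ j) (2 * 2 ^ j), g a := by
  have h1 : ∀ q : ℕ, ∑ j ∈ range q, ∑ a ∈ Ico (2 ^ j) (2 * 2 ^ j), g a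
      = ∑ a ∈ Ico 1 (2 ^ q), g a := by
    intro q
    induction q with
    | zero => simp
    | succ k ih =>
      rw [sum_range_succ, ih, pow_succ, mul_comm 2]
      exact sum_Ico_consecutive _ Nat.one_le_two_pow (by omega)
  rw [h1]
  refine sum_le_sum_of_subset_of_nonneg ?_ fun _ _ _ => hg _
  intro j hj
  have := Nat.lt_pow_succ_log_self (b := 2) (by norm_num) s
  simp only [mem_Icc, mem_Ico, Nat.succ_eq_add_one] at hj this ⊢
  omega

/-- hyperbola -/
lemma F_hyper (f : ℕ → ℂ) (N : ℕ) :
    ∑ u ∈ Icc 1 N, (u.divisors.card : ℂ) * f u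
      = 2 * ∑ a ∈ Icc 1 (Nat.sqrt N), ∑ b ∈ Ioc a (N / a), f (a * b)
        + ∑ a ∈ Icc 1 (Nat.sqrt N), f (a * a) := by
  classical
  set S : Finset (ℕ × ℕ) := (Icc 1 N ×ˢ Icc 1 N).filter fun x => x.1 * x.2 ≤ N with hS
  have e1 : ∑ u ∈ Icc 1 N, (u.divisors.card : ℂ) * f u = ∑ x ∈ S, f (x.1 * x.2) := by
    rw [← sum_fiberwise_of_maps_to (s := S) (t := Icc 1 N) (g := fun x => x.1 * x.2)
      (f := fun x => f (x.1 * x.2))]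
    · refine sum_congr rfl fun u hu => ?_
      simp only [mem_Icc] at hu
      rw [sum_congr rfl (g := fun _ => f u)
        (fun x hx => by rw [(mem_filter.1 hx).2])]
      rw [sum_const, nsmul_eq_mul]
      congr 2
      rw [← card_map (⟨fun d => (d, u / d), fun p₁ p₂ => congr_arg Prod.fst⟩ : ℕ ↪ ℕ × ℕ),
        Nat.map_div_right_divisors]
      congr 1
      ext ⟨a, b⟩
      simp only [hS, mem_filter, mem_product, mem_Icc, Nat.mem_divisorsAntidiagonal]
      constructor
      · rintro ⟨h, h0⟩
        have ha : 0 < a := Nat.pos_of_ne_zero (by rintro rfl; simp at h; omega)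
        have hb : 0 < b := Nat.pos_of_ne_zero (by rintro rfl; simp at h; omega)
        have := Nat.le_mul_of_pos_right a hb
        have := Nat.le_mul_of_pos_left b ha
        omega
      · rintro ⟨_, h⟩
        exact ⟨h, by omega⟩
    · intro x hx
      simp only [hS, mem_filter, mem_product, mem_Icc] at hx ⊢
      exact ⟨Nat.mul_pos (by omega) (by omega), hx.2⟩
  have e2 : ∑ x ∈ S, f (x.1 * x.2) = ∑ x ∈ S.filter (fun x => x.1 < x.2), f (x.1 * x.2)
      + (∑ x ∈ S.filter (fun x => x.2 < x.1), f (x.1 * x.2)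
        + ∑ x ∈ S.filter (fun x => x.1 = x.2), f (x.1 * x.2)) := by
    rw [← sum_filter_add_sum_filter_not S (fun x => x.1 < x.2)]
    congr 1
    rw [← sum_filter_add_sum_filter_not (S.filter fun x => ¬ x.1 < x.2) (fun x => x.2 < x.1)]
    congr 1
    · refine sum_congr ?_ fun _ _ => rfl
      ext x
      simp only [mem_filter]
      constructor
      · rintro ⟨⟨h, _⟩, h2⟩
        exact ⟨h, h2⟩
      · rintro ⟨h, h2⟩
        exact ⟨⟨h, by omega⟩, h2⟩
    · refine sum_congr ?_ fun _ _ => rfl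
      ext x
      simp only [mem_filter]
      constructor
      · rintro ⟨⟨h, _⟩, h2⟩
        exact ⟨h, by omega⟩
      · rintro ⟨h, h2⟩
        exact ⟨⟨h, by omega⟩, by omega⟩
  have e3 : ∑ x ∈ S.filter (fun x => x.2 < x.1), f (x.1 * x.2)
      = ∑ x ∈ S.filter (fun x => x.1 < x.2), f (x.1 * x.2) := by
    refine sum_nbij' Prod.swap Prod.swap ?_ ?_ (fun _ _ => rfl) (fun _ _ => rfl) ?_
    · intro x hx
      simp only [hS, mem_filter, mem_product, mem_Icc, Prod.fst_swap, Prod.snd_swap] at hx ⊢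
      rw [mul_comm]; tauto
    · intro x hx
      simp only [hS, mem_filter, mem_product, mem_Icc, Prod.fst_swap, Prod.snd_swap] at hx ⊢
      rw [mul_comm]; tauto
    · intro x _
      simp [mul_comm]
  have e4 : ∑ x ∈ S.filter (fun x => x.1 < x.2), f (x.1 * x.2)
      = ∑ a ∈ Icc 1 (Nat.sqrt N), ∑ b ∈ Ioc a (N / a), f (a * b) := by
    rw [sum_sigma']
    refine sum_nbij' (fun x => ⟨x.1, x.2⟩) (fun x => (x.1, x.2)) ?_ ?_
      (fun _ _ => rfl) (fun _ _ => rfl) (fun _ _ => rfl)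
    · rintro ⟨a, b⟩ hx
      simp only [hS, mem_filter, mem_product, mem_Icc, mem_sigma, mem_Ioc] at hx ⊢
      obtain ⟨⟨⟨⟨h1, _⟩, h2, _⟩, h3⟩, h4⟩ := hx
      refine ⟨⟨h1, Nat.le_sqrt.2 (le_trans (Nat.mul_le_mul_left a h4.le) h3)⟩, h4, ?_⟩
      rw [Nat.le_div_iff_mul_le (by omega), mul_comm]; exact h3
    · rintro ⟨a, b⟩ hx
      simp only [hS, mem_filter, mem_product, mem_Icc, mem_sigma, mem_Ioc] at hx ⊢
      obtain ⟨⟨h1, _⟩, h2, h3⟩ := hx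
      rw [Nat.le_div_iff_mul_le (by omega), mul_comm] at h3
      have := Nat.le_mul_of_pos_right a (show 0 < b by omega)
      have := Nat.le_mul_of_pos_left b (show 0 < a by omega)
      omega
  have e5 : ∑ x ∈ S.filter (fun x => x.1 = x.2), f (x.1 * x.2)
      = ∑ a ∈ Icc 1 (Nat.sqrt N), f (a * a) := by
    refine sum_nbij' (fun x => x.1) (fun x => (x, x)) ?_ ?_ ?_ (fun _ _ => rfl) ?_
    · rintro ⟨a, b⟩ hx
      simp only [hS, mem_filter, mem_product, mem_Icc] at hx ⊢
      obtain ⟨⟨⟨⟨h1, _⟩, h2, _⟩, h3⟩, rfl⟩ := hx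
      exact ⟨h1, Nat.le_sqrt.2 h3⟩
    · intro a hx
      simp only [hS, mem_filter, mem_product, mem_Icc] at hx ⊢
      have h := Nat.le_sqrt.1 hx.2
      have := Nat.le_mul_of_pos_right a (show 0 < a by omega)
      refine ⟨⟨⟨⟨hx.1, by omega⟩, hx.1, by omega⟩, h⟩, trivial⟩
    · rintro ⟨a, b⟩ hx
      have := (mem_filter.1 hx).2
      simp only at this
      simp [this]
    · rintro ⟨a, b⟩ hx
      have := (mem_filter.1 hx).2
      simp only at this
      simp [this]
  rw [e1, e2, e3, e4, e5]
  ring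


lemma F_J (N A B a : ℕ) (hA : 0 < A) (hB : 0 < B) (ha : A ≤ a) :
    (N / a + 1) / B ≤ N / (A * B) + 1 := by
  rw [← Nat.div_div_eq_div_mul]
  calc (N / a + 1) / B ≤ (N / A + B) / B :=
        Nat.div_le_div_right (Nat.add_le_add (Nat.div_le_div_left ha hA) hB)
    _ = N / A / B + 1 := Nat.add_div_right _ hB

lemma F_case1 (p : ℕ) [Fact p.Prime] (χ : MulChar (ZMod p) ℂ) (N M A B L : ℕ) (K : ℝ)
    (hA : 0 < A) (hB : 0 < B) (hL : 0 < L)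
    (hD : ∀ b0 v0 : ZMod p, ∑ a ∈ Ico A (2 * A), ∑ ν ∈ range L,
      ‖∑ β ∈ range B, χ (a * (b0 + β) - (v0 + ν))‖ ≤ K) :
    ∑ a ∈ Ico A (2 * A), ∑ v ∈ Icc 1 M, ‖∑ b ∈ Ioc a (N / a), χ (a * b - v)‖
      ≤ ((N / (A * B) + 1 : ℕ) : ℝ) * ((M / L + 1 : ℕ) : ℝ) * K + 2 * A * B * M := by
  set J := N / (A * B) + 1 with hJ
  set I := M / L + 1 with hI
  have hIL : M < I * L := by
    rw [hI, mul_comm]; exact Nat.lt_mul_div_succ M hL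
  calc _ ≤ ∑ a ∈ Ico A (2 * A), ∑ v ∈ Icc 1 M,
        (∑ j ∈ range J, ‖∑ β ∈ range B, χ (a * ((j * B + β : ℕ) : ZMod p) - v)‖ + 2 * B) := by
        refine sum_le_sum fun a ha => sum_le_sum fun v _ => ?_
        exact F_blocks (fun b => χ (a * b - v)) (fun n => DirichletCharacter.norm_le_one χ _)
          B a (N / a) J hB (F_J N A B a hA hB (mem_Ico.1 ha).1)
    _ = ∑ a ∈ Ico A (2 * A), ∑ v ∈ Icc 1 M,
        ∑ j ∈ range J, ‖∑ β ∈ range B, χ (a * ((j * B + β : ℕ) : ZMod p) - v)‖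
        + 2 * A * B * M := by
        simp only [sum_add_distrib, sum_const, Nat.card_Icc, Nat.card_Ico, nsmul_eq_mul]
        have : 2 * A - A = A := by omega
        rw [this]
        simp only [Nat.add_sub_cancel]
        ring
    _ ≤ ∑ a ∈ Ico A (2 * A), ∑ i ∈ range I, ∑ ν ∈ range L,
        ∑ j ∈ range J, ‖∑ β ∈ range B, χ (a * ((j * B + β : ℕ) : ZMod p) - (i * L + ν : ℕ))‖
        + 2 * A * B * M := by
        gcongr with a ha
        exact F_cover (fun v => ∑ j ∈ range J,
          ‖∑ β ∈ range B, χ (a * ((j * B + β : ℕ) : ZMod p) - v)‖)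
          (fun v => sum_nonneg fun _ _ => norm_nonneg _) M L I hIL
    _ = ∑ i ∈ range I, ∑ j ∈ range J, ∑ a ∈ Ico A (2 * A), ∑ ν ∈ range L,
        ‖∑ β ∈ range B, χ (a * (((j * B : ℕ) : ZMod p) + β) - (((i * L : ℕ) : ZMod p) + ν))‖
        + 2 * A * B * M := by
        congr 1
        rw [sum_comm]
        refine sum_congr rfl fun i _ => ?_
        rw [sum_comm (s := range J)]
        refine sum_congr rfl fun a _ => ?_
        rw [sum_comm]
        push_cast
        rfl
    _ ≤ ∑ i ∈ range I, ∑ j ∈ range J, K + 2 * A * B * M := by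
        gcongr with i _ j _
        exact hD _ _
    _ = _ := by
        simp only [sum_const, card_range, nsmul_eq_mul]
        ring

lemma F_case2 (p : ℕ) [Fact p.Prime] (χ : MulChar (ZMod p) ℂ) (N M A B : ℕ) (K : ℝ)
    (hA : 0 < A) (hB : 0 < B) (hAp : 2 * A ≤ p)
    (hD : ∀ b0 v0 : ZMod p, ‖∑ β ∈ range B, χ ((b0 + β) - v0)‖ ≤ K) :
    ∑ a ∈ Ico A (2 * A), ∑ v ∈ Icc 1 M, ‖∑ b ∈ Ioc a (N / a), χ (a * b - v)‖
      ≤ ((N / (A * B) + 1 : ℕ) : ℝ) * (A * M) * K + 2 * A * B * M := by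
  set J := N / (A * B) + 1 with hJ
  calc _ ≤ ∑ a ∈ Ico A (2 * A), ∑ v ∈ Icc 1 M,
        (∑ j ∈ range J, ‖∑ β ∈ range B, χ (a * ((j * B + β : ℕ) : ZMod p) - v)‖ + 2 * B) := by
        refine sum_le_sum fun a ha => sum_le_sum fun v _ => ?_
        exact F_blocks (fun b => χ (a * b - v)) (fun n => DirichletCharacter.norm_le_one χ _)
          B a (N / a) J hB (F_J N A B a hA hB (mem_Ico.1 ha).1)
    _ ≤ ∑ a ∈ Ico A (2 * A), ∑ v ∈ Icc 1 M, (∑ j ∈ range J, K + 2 * B) := by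
        gcongr with a ha v _ j _
        rw [mem_Ico] at ha
        have ha0 : (a : ZMod p) ≠ 0 := by
          rw [Ne, ZMod.natCast_eq_zero_iff]
          exact Nat.not_dvd_of_pos_of_lt (by omega) (by omega)
        have e : ∑ β ∈ range B, χ (a * ((j * B + β : ℕ) : ZMod p) - v)
            = χ a * ∑ β ∈ range B, χ ((((j * B : ℕ) : ZMod p) + β) - v / a) := by
          rw [mul_sum]
          refine sum_congr rfl fun β _ => ?_
          rw [← map_mul]
          congr 1
          push_cast
          field_simp
        rw [e, norm_mul]
        calc _ ≤ 1 * K := mul_le_mul (DirichletCharacter.norm_le_one χ _) (hD _ _)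
                (norm_nonneg _) zero_le_one
          _ = K := one_mul K
    _ = _ := by
        simp only [sum_add_distrib, sum_const, Nat.card_Icc, Nat.card_Ico, nsmul_eq_mul, card_range]
        have : 2 * A - A = A := by omega
        rw [this]
        simp only [Nat.add_sub_cancel]
        ring

lemma F_div (N D : ℕ) (hD : 0 < D) (h : D ≤ N) : ((N / D + 1 : ℕ) : ℝ) * D ≤ 2 * N := by
  have := Nat.div_mul_le_self N D
  have : (N / D + 1) * D ≤ 2 * N := by rw [add_mul]; omega
  exact_mod_cast this

lemma F_floor (x : ℝ) (hx : 1 ≤ x) : x / 2 ≤ (⌊x⌋₊ : ℝ) ∧ (⌊x⌋₊ : ℝ) ≤ x ∧ 0 < ⌊x⌋₊ := by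
  have h1 := Nat.lt_floor_add_one x
  have h2 := Nat.floor_le (show 0 ≤ x by linarith)
  have h3 : 0 < ⌊x⌋₊ := Nat.floor_pos.2 hx
  have h4 : (1 : ℝ) ≤ (⌊x⌋₊ : ℝ) := by exact_mod_cast h3
  exact ⟨by linarith, h2, h3⟩

set_option maxHeartbeats 1000000 in
lemma F_H (δ : ℝ) (hδ : 0 < δ) (hδ1 : δ ≤ 1 / 256) : ∃ κ : ℝ, 0 < κ ∧ κ ≤ δ ∧ ∃ C : ℝ, 1 ≤ C ∧
    ∀ (p : ℕ) [Fact p.Prime] (χ : MulChar (ZMod p) ℂ), χ ≠ 1 → 100 ≤ (p : ℝ) ^ δ →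
    ∀ N M A : ℕ, (p : ℝ) ^ (1 / 4 + 64 * δ) ≤ N → N ≤ p → (p : ℝ) ^ (1 / 4 : ℝ) ≤ M →
      0 < A → A * A ≤ N →
      ∑ a ∈ Ico A (2 * A), ∑ v ∈ Icc 1 M, ‖∑ b ∈ Ioc a (N / a), χ (a * b - v)‖
        ≤ C * N * M * (p : ℝ) ^ (-κ) := by
  obtain ⟨κ, hκ, hκδ, C, hC, hmain⟩ := main_D2 δ hδ (by linarith)
  refine ⟨κ, hκ, hκδ, 6 * C, by linarith, ?_⟩
  intro p _ χ hχ hX N M A hN hNp hM hA hAN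
  have hp0 : (0 : ℝ) < p := by exact_mod_cast (Fact.out : p.Prime).pos
  have hp1 : (1 : ℝ) ≤ p := by exact_mod_cast (Fact.out : p.Prime).one_lt.le
  have mono : ∀ {s t : ℝ}, s ≤ t → (p : ℝ) ^ s ≤ (p : ℝ) ^ t := fun h =>
    Real.rpow_le_rpow_of_exponent_le hp1 h
  have absorb : ∀ {s t : ℝ}, s + δ ≤ t → 100 * (p : ℝ) ^ s ≤ (p : ℝ) ^ t := by
    intro s t h
    calc 100 * (p : ℝ) ^ s ≤ (p : ℝ) ^ δ * (p : ℝ) ^ s := by gcongr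
      _ = (p : ℝ) ^ (s + δ) := by rw [← Real.rpow_add hp0, add_comm]
      _ ≤ _ := mono h
  have pos : ∀ s : ℝ, 0 < (p : ℝ) ^ s := fun s => Real.rpow_pos_of_pos hp0 s
  have hA1 : (1 : ℝ) ≤ A := by exact_mod_cast hA
  have hA0 : (0 : ℝ) < A := by linarith
  have hAN' : (A : ℝ) * A ≤ N := by exact_mod_cast hAN
  have hN0 : (0 : ℝ) < N := by nlinarith
  have hM0 : (0 : ℝ) < M := (pos _).trans_le hM
  have hE : (p : ℝ) ^ (-(2 * δ)) ≤ (p : ℝ) ^ (-κ) := mono (by linarith)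
  have hE1 : (p : ℝ) ^ (-(2 * δ)) ≤ 1 := Real.rpow_le_one_of_one_le_of_nonpos hp1 (by linarith)
  rcases le_or_gt (N : ℝ) ((p : ℝ) ^ (1 / 2 + 8 * δ)) with hcase | hcase
  · -- case 1
    set x : ℝ := N * (p : ℝ) ^ (-(16 * δ)) / A with hx
    set y : ℝ := (p : ℝ) ^ (1 / 4 : ℝ) with hy
    have hAx : A * x = N * (p : ℝ) ^ (-(16 * δ)) := by rw [hx]; field_simp
    have hAx2 : (p : ℝ) ^ (1 / 4 + 48 * δ) ≤ A * x := by
      rw [hAx]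
      calc (p : ℝ) ^ (1 / 4 + 48 * δ) = (p : ℝ) ^ (1 / 4 + 64 * δ) * (p : ℝ) ^ (-(16 * δ)) := by
            rw [← Real.rpow_add hp0]; congr 1; ring
        _ ≤ _ := by gcongr
    have hx1 : (p : ℝ) ^ (1 / 8 : ℝ) ≤ x := by
      have hsq : ((p : ℝ) ^ (1 / 8 : ℝ) * A) ^ 2 ≤ (A * x) ^ 2 := by
        rw [hAx, mul_pow, mul_pow, ← Real.rpow_mul_natCast hp0.le, ← Real.rpow_mul_natCast hp0.le]
        calc _ ≤ (p : ℝ) ^ (1 / 8 * ((2 : ℕ) : ℝ)) * N := by gcongr; rw [sq]; exact hAN'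
          _ ≤ ((p : ℝ) ^ (1 / 4 + 64 * δ) * (p : ℝ) ^ (-(16 * δ) * ((2 : ℕ) : ℝ))) * N := by
            gcongr
            rw [← Real.rpow_add hp0]
            apply mono; push_cast; linarith
          _ ≤ (N * (p : ℝ) ^ (-(16 * δ) * ((2 : ℕ) : ℝ))) * N := by gcongr
          _ = _ := by ring
      have hx0 : 0 ≤ x := by positivity
      have := abs_le_of_sq_le_sq' hsq (by positivity)
      exact le_of_mul_le_mul_right (by linarith [this.2]) hA0
    have hx1' : 1 ≤ x := le_trans (Real.one_le_rpow hp1 (by norm_num)) hx1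
    have hy1 : 1 ≤ y := Real.one_le_rpow hp1 (by norm_num)
    obtain ⟨b1, b2, b3⟩ := F_floor x hx1'
    obtain ⟨l1, l2, l3⟩ := F_floor y hy1
    set B := ⌊x⌋₊
    set L := ⌊y⌋₊
    have hB0 : (0 : ℝ) < B := by exact_mod_cast b3
    have hAB : (A : ℝ) * B ≤ N * (p : ℝ) ^ (-(16 * δ)) := by
      rw [← hAx]; gcongr
    have hAB2 : A * x / 2 ≤ (A : ℝ) * B := by
      have := mul_le_mul_of_nonneg_left b1 hA0.le
      linarith
    have hABl : (p : ℝ) ^ (1 / 4 + δ) ≤ A * B := by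
      have := absorb (s := 1 / 4 + δ) (t := 1 / 4 + 48 * δ) (by linarith)
      linarith [pos (1 / 4 + δ)]
    have hABN : (A : ℝ) * B ≤ N * (p : ℝ) ^ (-(2 * δ)) :=
      hAB.trans (by gcongr 1; exact mono (by linarith))
    have hABN1 : A * B ≤ N := by
      have : (A : ℝ) * B ≤ N := hABN.trans (mul_le_of_le_one_right hN0.le hE1)
      exact_mod_cast this
    have hLAB : L ≤ A * B := by
      have : (L : ℝ) ≤ A * B := l2.trans ((mono (by linarith)).trans hABl)
      exact_mod_cast this
    have hLM : L ≤ M := by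
      have : (L : ℝ) ≤ M := l2.trans hM
      exact_mod_cast this
    have hAB24 : 24 * (A * B) ^ 2 < p := by
      have h1 : (A : ℝ) * B ≤ (p : ℝ) ^ (1 / 2 - 8 * δ) := by
        refine hAB.trans ?_
        calc _ ≤ (p : ℝ) ^ (1 / 2 + 8 * δ) * (p : ℝ) ^ (-(16 * δ)) := by gcongr
          _ = _ := by rw [← Real.rpow_add hp0]; congr 1; ring
      have h2 : ((A : ℝ) * B) ^ 2 ≤ (p : ℝ) ^ (1 - 16 * δ) := by
        calc _ ≤ ((p : ℝ) ^ (1 / 2 - 8 * δ)) ^ 2 := by gcongr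
          _ = _ := by rw [← Real.rpow_mul_natCast hp0.le]; congr 1; push_cast; ring
      have h3 := absorb (s := 1 - 16 * δ) (t := 1) (by linarith)
      rw [Real.rpow_one] at h3
      have : (24 : ℝ) * (A * B) ^ 2 < p := by linarith [pos (1 - 16 * δ)]
      exact_mod_cast this
    have hBd : (p : ℝ) ^ δ ≤ B := by
      have := absorb (s := δ) (t := 1 / 8) (by linarith)
      linarith [pos δ]
    have hBL : (p : ℝ) ^ (1 / 4 + δ) ≤ B * L := by
      have h1 := absorb (s := δ) (t := 1 / 8) (by linarith)
      have h2 : 4 * (p : ℝ) ^ δ ≤ B := by linarith [pos δ]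
      calc (p : ℝ) ^ (1 / 4 + δ) = (p : ℝ) ^ δ * y := by rw [hy, ← Real.rpow_add hp0, add_comm]
        _ ≤ (4 * (p : ℝ) ^ δ) * (y / 2) := by
          have := mul_pos (pos δ) (show 0 < y by linarith)
          linarith
        _ ≤ B * L := by gcongr
    have key := F_case1 p χ N M A B L (C * A * B * L * (p : ℝ) ^ (-κ)) hA b3 l3
      (fun b0 v0 => hmain p χ hχ A B L b0 v0 hA l3 hLAB hAB24 hBd hABl hBL)
    refine key.trans ?_
    have d1 := F_div N (A * B) (Nat.mul_pos hA b3) hABN1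
    have d2 := F_div M L l3 hLM
    calc _ = C * (p : ℝ) ^ (-κ) * ((((N / (A * B) + 1 : ℕ) : ℝ) * (A * B : ℕ))
            * (((M / L + 1 : ℕ) : ℝ) * L)) + 2 * M * (A * B) := by push_cast; ring
      _ ≤ C * (p : ℝ) ^ (-κ) * ((2 * N) * (2 * M)) + 2 * M * (N * (p : ℝ) ^ (-κ)) := by
          refine add_le_add (by gcongr) (mul_le_mul_of_nonneg_left ?_ (by positivity))
          exact hABN.trans (mul_le_mul_of_nonneg_left hE hN0.le)
      _ ≤ _ := by
          have h0 : 0 ≤ (N : ℝ) * M * (p : ℝ) ^ (-κ) := by positivity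
          have h1 := mul_le_mul_of_nonneg_right hC h0
          linarith
  · set x : ℝ := (p : ℝ) ^ (1 / 4 + 2 * δ) with hx
    have hx1' : 1 ≤ x := Real.one_le_rpow hp1 (by linarith)
    obtain ⟨b1, b2, b3⟩ := F_floor x hx1'
    set B := ⌊x⌋₊
    have hB0 : (0 : ℝ) < B := by exact_mod_cast b3
    have hABN : (A : ℝ) * B ≤ N * (p : ℝ) ^ (-(2 * δ)) := by
      have hsq : ((A : ℝ) * B) ^ 2 ≤ (N * (p : ℝ) ^ (-(2 * δ))) ^ 2 := by
        calc ((A : ℝ) * B) ^ 2 = (A * A) * B ^ 2 := by ring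
          _ ≤ N * x ^ 2 := by gcongr
          _ = N * (p : ℝ) ^ (1 / 2 + 4 * δ) := by
            rw [hx, ← Real.rpow_mul_natCast hp0.le]; congr 2; push_cast; ring
          _ = N * ((p : ℝ) ^ (1 / 2 + 8 * δ) * (p : ℝ) ^ (-(4 * δ))) := by
            rw [← Real.rpow_add hp0]; congr 2; ring
          _ ≤ N * (N * (p : ℝ) ^ (-(4 * δ))) := by gcongr
          _ = _ := by
            rw [mul_pow, ← Real.rpow_mul_natCast hp0.le]
            have : -(2 * δ) * ((2 : ℕ) : ℝ) = -(4 * δ) := by push_cast; ring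
            rw [this]; ring
      exact (abs_le_of_sq_le_sq' hsq (by positivity)).2
    have hABN1 : A * B ≤ N := by
      have : (A : ℝ) * B ≤ N := hABN.trans (mul_le_of_le_one_right hN0.le hE1)
      exact_mod_cast this
    have hAp : 2 * A ≤ p := by
      have h100 : (100 : ℝ) ≤ p := by
        calc (100 : ℝ) ≤ (p : ℝ) ^ δ := hX
          _ ≤ (p : ℝ) ^ (1 : ℝ) := mono (by linarith)
          _ = p := Real.rpow_one _
      have h100' : 100 ≤ p := by exact_mod_cast h100
      nlinarith
    have hBl : (p : ℝ) ^ (1 / 4 + δ) ≤ B := by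
      have := absorb (s := 1 / 4 + δ) (t := 1 / 4 + 2 * δ) (by linarith)
      linarith [pos (1 / 4 + δ)]
    have hB24 : 24 * (1 * B) ^ 2 < p := by
      have h2 : (B : ℝ) ^ 2 ≤ (p : ℝ) ^ (1 / 2 + 4 * δ) := by
        calc _ ≤ x ^ 2 := by gcongr
          _ = _ := by rw [hx, ← Real.rpow_mul_natCast hp0.le]; congr 1; push_cast; ring
      have h3 := absorb (s := 1 / 2 + 4 * δ) (t := 1) (by linarith)
      rw [Real.rpow_one] at h3
      have : (24 : ℝ) * (1 * B) ^ 2 < p := by rw [one_mul]; linarith [pos (1 / 2 + 4 * δ)]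
      exact_mod_cast this
    have key := F_case2 p χ N M A B (C * B * (p : ℝ) ^ (-κ)) hA b3 hAp
      (fun b0 v0 => by
        have := hmain p χ hχ 1 B 1 b0 v0 one_pos one_pos (by omega) hB24
          ((mono (by linarith)).trans hBl) (by simpa using hBl) (by simpa using hBl)
        simpa using this)
    refine key.trans ?_
    have d1 := F_div N (A * B) (Nat.mul_pos hA b3) hABN1
    calc _ = C * (p : ℝ) ^ (-κ) * ((((N / (A * B) + 1 : ℕ) : ℝ) * (A * B : ℕ))
            * M) + 2 * M * (A * B) := by push_cast; ring
      _ ≤ C * (p : ℝ) ^ (-κ) * ((2 * N) * M) + 2 * M * (N * (p : ℝ) ^ (-κ)) := by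
          refine add_le_add (by gcongr) (mul_le_mul_of_nonneg_left ?_ (by positivity))
          exact hABN.trans (mul_le_mul_of_nonneg_left hE hN0.le)
      _ ≤ _ := by
          have h0 : 0 ≤ (N : ℝ) * M * (p : ℝ) ^ (-κ) := by positivity
          have h1 := mul_le_mul_of_nonneg_right hC h0
          linarith


lemma F_big (δ : ℝ) (hδ : 0 < δ) (hδ1 : δ ≤ 1 / 256) : ∃ κ : ℝ, 0 < κ ∧ κ ≤ δ ∧ ∃ C : ℝ, 1 ≤ C ∧
    ∀ (p : ℕ) [Fact p.Prime] (χ : MulChar (ZMod p) ℂ), χ ≠ 1 → 100 ≤ (p : ℝ) ^ δ →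
    ∀ N M : ℕ, (p : ℝ) ^ (1 / 4 + 64 * δ) ≤ N → N ≤ p → (p : ℝ) ^ (1 / 4 : ℝ) ≤ M → M ≤ p →
      ‖∑ u ∈ Icc 1 N, ∑ v ∈ Icc 1 M, (u.divisors.card : ℂ) * (v.divisors.card : ℂ) *
            χ (((u : ℤ) - (v : ℤ) : ℤ) : ZMod p)‖ ≤ C * N * M * (p : ℝ) ^ (-κ) := by
  obtain ⟨κ, hκ, hκδ, C, hC, hmain⟩ := F_H δ hδ hδ1
  obtain ⟨D, hD, hdiv⟩ := divisor_bound (κ / 4) (by linarith)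
  refine ⟨κ / 2, by linarith, by linarith, 3 * C * D ^ 2, ?_, ?_⟩
  · have : 1 ≤ D ^ 2 := one_le_pow₀ hD
    nlinarith
  intro p _ χ hχ hX N M hN hNp hM hMp
  have hp0 : (0 : ℝ) < p := by exact_mod_cast (Fact.out : p.Prime).pos
  have hp1 : (1 : ℝ) ≤ p := by exact_mod_cast (Fact.out : p.Prime).one_lt.le
  have mono : ∀ {s t : ℝ}, s ≤ t → (p : ℝ) ^ s ≤ (p : ℝ) ^ t := fun h =>
    Real.rpow_le_rpow_of_exponent_le hp1 h
  have pos : ∀ s : ℝ, 0 < (p : ℝ) ^ s := fun s => Real.rpow_pos_of_pos hp0 s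
  set E := (p : ℝ) ^ (κ / 4) with hE
  have hE1 : 1 ≤ E := Real.one_le_rpow hp1 (by linarith)
  have hdp : ∀ n : ℕ, 0 < n → n ≤ p → (n.divisors.card : ℝ) ≤ D * E := by
    intro n h0 h1
    refine (hdiv n h0).trans ?_
    rw [hE]
    gcongr
  set s := Nat.sqrt N with hs
  have hss : s * s ≤ N := Nat.sqrt_le N
  have hN0 : (0 : ℝ) < N := (pos _).trans_le hN
  have hM0 : (0 : ℝ) < M := (pos _).trans_le hM
  have hN0' : 0 < N := by exact_mod_cast hN0
  have hs0 : 0 < s := Nat.sqrt_pos.2 hN0'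
  have hsN : s ≤ N := Nat.sqrt_le_self N
  -- the number of dyadic blocks
  have hlog : ((Nat.log 2 s + 1 : ℕ) : ℝ) ≤ D * E := by
    have h1 : 2 ^ Nat.log 2 s ≤ s := Nat.pow_log_le_self 2 hs0.ne'
    have h2 := hdp (2 ^ Nat.log 2 s) (by positivity) (by omega)
    rwa [Nat.divisors_prime_pow Nat.prime_two, card_map, card_range] at h2
  -- dyadic sum
  have hdy : ∑ a ∈ Icc 1 s, ∑ v ∈ Icc 1 M, ‖∑ b ∈ Ioc a (N / a), χ (a * b - v)‖
      ≤ (D * E) * (C * N * M * (p : ℝ) ^ (-κ)) := by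
    refine (F_dyadic (fun a => ∑ v ∈ Icc 1 M, ‖∑ b ∈ Ioc a (N / a), χ (a * b - v)‖)
      (fun a => sum_nonneg fun _ _ => norm_nonneg _) s).trans ?_
    calc _ ≤ ∑ j ∈ range (Nat.log 2 s + 1), C * N * M * (p : ℝ) ^ (-κ) := by
          refine sum_le_sum fun j hj => ?_
          have hj' : j ≤ Nat.log 2 s := by
            rw [mem_range] at hj; omega
          have h1 : 2 ^ j ≤ s :=
            (Nat.pow_le_pow_right (by norm_num) hj').trans (Nat.pow_log_le_self 2 hs0.ne')
          exact hmain p χ hχ hX N M (2 ^ j) hN hNp hM (by positivity)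
            ((Nat.mul_le_mul h1 h1).trans hss)
      _ = ((Nat.log 2 s + 1 : ℕ) : ℝ) * (C * N * M * (p : ℝ) ^ (-κ)) := by
          rw [sum_const, card_range, nsmul_eq_mul]
      _ ≤ _ := by gcongr
  have hsb : (s : ℝ) ≤ N * (p : ℝ) ^ (-κ) := by
    have hsq : (s : ℝ) ^ 2 ≤ (N * (p : ℝ) ^ (-κ)) ^ 2 := by
      have h1 : (s : ℝ) * s ≤ N := by exact_mod_cast hss
      calc (s : ℝ) ^ 2 ≤ N := by rw [sq]; exact h1
        _ = N * ((p : ℝ) ^ (2 * κ) * (p : ℝ) ^ (-(2 * κ))) := by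
            rw [← Real.rpow_add hp0]; simp
        _ ≤ N * (N * (p : ℝ) ^ (-(2 * κ))) := by
            gcongr
            exact (mono (by linarith)).trans hN
        _ = _ := by
            rw [mul_pow, ← Real.rpow_mul_natCast hp0.le]
            have : -κ * ((2 : ℕ) : ℝ) = -(2 * κ) := by push_cast; ring
            rw [this]; ring
    exact (abs_le_of_sq_le_sq' hsq (by positivity)).2
  have hv : ∀ v ∈ Icc 1 M, ‖∑ u ∈ Icc 1 N, (u.divisors.card : ℂ) * (v.divisors.card : ℂ) *
            χ (((u : ℤ) - (v : ℤ) : ℤ) : ZMod p)‖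
      ≤ D * E * (2 * ∑ a ∈ Icc 1 s, ‖∑ b ∈ Ioc a (N / a), χ (a * b - v)‖ + s) := by
    intro v hv
    rw [mem_Icc] at hv
    have e1 : ∑ u ∈ Icc 1 N, (u.divisors.card : ℂ) * (v.divisors.card : ℂ) *
            χ (((u : ℤ) - (v : ℤ) : ℤ) : ZMod p)
        = (v.divisors.card : ℂ) * ∑ u ∈ Icc 1 N, (u.divisors.card : ℂ) *
            χ ((u : ZMod p) - v) := by
      rw [mul_sum]
      refine sum_congr rfl fun u _ => ?_
      push_cast
      ring
    rw [e1, F_hyper (fun u => χ ((u : ZMod p) - v)) N, norm_mul, Complex.norm_natCast]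
    refine mul_le_mul (hdp v (by omega) (by omega)) ?_ (norm_nonneg _) (by positivity)
    refine (norm_add_le _ _).trans (add_le_add ?_ ?_)
    · rw [norm_mul, Complex.norm_ofNat]
      refine mul_le_mul_of_nonneg_left ((norm_sum_le _ _).trans (le_of_eq ?_)) (by norm_num)
      push_cast
      rfl
    · refine (norm_sum_le _ _).trans ?_
      calc _ ≤ ∑ a ∈ Icc 1 s, (1 : ℝ) := sum_le_sum fun a _ => DirichletCharacter.norm_le_one χ _
        _ = s := by simp
  have hfin : E * E * (p : ℝ) ^ (-κ) = (p : ℝ) ^ (-(κ / 2)) := by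
    rw [hE, ← Real.rpow_add hp0, ← Real.rpow_add hp0]; congr 1; ring
  rw [sum_comm]
  calc _ ≤ ∑ v ∈ Icc 1 M, D * E *
        (2 * ∑ a ∈ Icc 1 s, ‖∑ b ∈ Ioc a (N / a), χ (a * b - v)‖ + s) :=
        (norm_sum_le _ _).trans (sum_le_sum hv)
    _ = D * E * (2 * ∑ a ∈ Icc 1 s, ∑ v ∈ Icc 1 M, ‖∑ b ∈ Ioc a (N / a), χ (a * b - v)‖
        + M * s) := by
        rw [← mul_sum, sum_add_distrib, ← mul_sum, sum_comm]
        simp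
    _ ≤ D * E * (2 * ((D * E) * (C * N * M * (p : ℝ) ^ (-κ))) + M * (N * (p : ℝ) ^ (-κ))) := by
        gcongr
    _ = (2 * C * D ^ 2 * (E * E) + D * E) * (N * M * (p : ℝ) ^ (-κ)) := by ring
    _ ≤ (2 * C * D ^ 2 * (E * E) + C * D ^ 2 * (E * E)) * (N * M * (p : ℝ) ^ (-κ)) := by
        refine mul_le_mul_of_nonneg_right (add_le_add le_rfl ?_) (by positivity)
        have hDE : 1 ≤ D * E := one_le_mul_of_one_le_of_one_le hD hE1
        have : D * E * 1 ≤ D * E * (D * E) := by gcongr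
        have h2 : 1 * (D * E * (D * E)) ≤ C * (D * E * (D * E)) := by gcongr
        calc D * E ≤ C * (D * E * (D * E)) := by linarith
          _ = _ := by ring
    _ = 3 * C * D ^ 2 * N * M * (E * E * (p : ℝ) ^ (-κ)) := by ring
    _ = _ := by rw [hfin]

lemma F_small (p : ℕ) [Fact p.Prime] (χ : MulChar (ZMod p) ℂ) (N M : ℕ) :
      ‖∑ u ∈ Icc 1 N, ∑ v ∈ Icc 1 M, (u.divisors.card : ℂ) * (v.divisors.card : ℂ) *
            χ (((u : ℤ) - (v : ℤ) : ℤ) : ZMod p)‖ ≤ N * M * (N * M) := by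
  calc _ ≤ ∑ u ∈ Icc 1 N, ∑ v ∈ Icc 1 M, ((N : ℝ) * M) := by
        refine (norm_sum_le _ _).trans (sum_le_sum fun u hu => ?_)
        refine (norm_sum_le _ _).trans (sum_le_sum fun v hv => ?_)
        rw [mem_Icc] at hu hv
        rw [norm_mul, norm_mul, Complex.norm_natCast, Complex.norm_natCast]
        have h1 : (u.divisors.card : ℝ) ≤ N := by
          exact_mod_cast (Nat.card_divisors_le_self u).trans hu.2
        have h2 : (v.divisors.card : ℝ) ≤ M := by
          exact_mod_cast (Nat.card_divisors_le_self v).trans hv.2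
        calc _ ≤ (N : ℝ) * M * 1 := by
              gcongr
              exact DirichletCharacter.norm_le_one χ _
          _ = _ := mul_one _
    _ = _ := by simp; ring

theorem divisor_character_sum (η : ℝ) (hη : 0 < η) :
    ∃ κ : ℝ, 0 < κ ∧ ∃ C : ℝ, 0 < C ∧ ∀ (p : ℕ), p.Prime →
      ∀ (χ : MulChar (ZMod p) ℂ), χ ≠ 1 →
      ∀ (U V : ℝ), (p : ℝ) ^ ((1 : ℝ) / 4 + η) < U → U ≤ (p : ℝ) →
        (p : ℝ) ^ ((1 : ℝ) / 4 + η) < V → V ≤ (p : ℝ) →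
      ‖∑ u ∈ Icc 1 ⌊U⌋₊, ∑ v ∈ Icc 1 ⌊V⌋₊,
          (u.divisors.card : ℂ) * (v.divisors.card : ℂ) *
            χ (((u : ℤ) - (v : ℤ) : ℤ) : ZMod p)‖ ≤ C * U * V * (p : ℝ) ^ (-κ) := by
  set δ : ℝ := min η (1 / 4) / 128 with hδd
  have hm1 : min η (1 / 4) ≤ η := min_le_left _ _
  have hm2 : min η (1 / 4) ≤ 1 / 4 := min_le_right _ _
  have hδ : 0 < δ := by positivity
  obtain ⟨κ, hκ, hκδ, C, hC, hmain⟩ := F_big δ hδ (by linarith)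
  set P : ℝ := (100 : ℝ) ^ (1 / δ) with hP
  have hP0 : 0 < P := by positivity
  refine ⟨κ, hκ, C + P ^ 3, by positivity, ?_⟩
  intro p hp χ hχ U V hU hUp hV hVp
  have : Fact p.Prime := ⟨hp⟩
  have hp0 : (0 : ℝ) < p := by exact_mod_cast hp.pos
  have hp1 : (1 : ℝ) ≤ p := by exact_mod_cast hp.one_lt.le
  have mono : ∀ {s t : ℝ}, s ≤ t → (p : ℝ) ^ s ≤ (p : ℝ) ^ t := fun h =>
    Real.rpow_le_rpow_of_exponent_le hp1 h
  have pos : ∀ s : ℝ, 0 < (p : ℝ) ^ s := fun s => Real.rpow_pos_of_pos hp0 s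
  have h1 : 1 ≤ (p : ℝ) ^ ((1 : ℝ) / 4 + η) := Real.one_le_rpow hp1 (by linarith)
  obtain ⟨u1, u2, u3⟩ := F_floor U (by linarith)
  obtain ⟨v1, v2, v3⟩ := F_floor V (by linarith)
  set N := ⌊U⌋₊
  set M := ⌊V⌋₊
  have hU0 : 0 < U := by linarith
  have hV0 : 0 < V := by linarith
  rcases le_or_gt 100 ((p : ℝ) ^ δ) with hX | hX
  · have hbig : 100 * (p : ℝ) ^ (1 / 4 + 64 * δ) ≤ (p : ℝ) ^ ((1 : ℝ) / 4 + η) := by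
      calc _ ≤ (p : ℝ) ^ δ * (p : ℝ) ^ (1 / 4 + 64 * δ) := by gcongr
        _ = (p : ℝ) ^ (δ + (1 / 4 + 64 * δ)) := by rw [← Real.rpow_add hp0]
        _ ≤ _ := mono (by linarith)
    have hq := pos (1 / 4 + 64 * δ)
    have hN : (p : ℝ) ^ (1 / 4 + 64 * δ) ≤ N := by linarith
    have hM : (p : ℝ) ^ (1 / 4 : ℝ) ≤ M :=
      (mono (show (1 / 4 : ℝ) ≤ 1 / 4 + 64 * δ by linarith)).trans (by linarith)
    have hNp : N ≤ p := by
      have : (N : ℝ) ≤ p := u2.trans hUp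
      exact_mod_cast this
    have hMp : M ≤ p := by
      have : (M : ℝ) ≤ p := v2.trans hVp
      exact_mod_cast this
    refine (hmain p χ hχ hX N M hN hNp hM hMp).trans ?_
    have : C ≤ C + P ^ 3 := by linarith [pow_pos hP0 3]
    gcongr
  · have hpP : (p : ℝ) ≤ P := by
      calc (p : ℝ) = ((p : ℝ) ^ δ) ^ (1 / δ) := by
            rw [← Real.rpow_mul hp0.le, mul_one_div_cancel hδ.ne', Real.rpow_one]
        _ ≤ _ := by rw [hP]; gcongr
    refine (F_small p χ N M).trans ?_
    have hk : (p : ℝ) ^ 2 ≤ P ^ 3 * (p : ℝ) ^ (-κ) := by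
      calc (p : ℝ) ^ 2 = (p : ℝ) ^ 3 * (p : ℝ) ^ (-1 : ℝ) := by
            rw [Real.rpow_neg_one]; field_simp
        _ ≤ _ := by
            gcongr
            linarith
    have hNM : (N : ℝ) * M ≤ (p : ℝ) ^ 2 := by
      rw [sq]
      exact mul_le_mul (u2.trans hUp) (v2.trans hVp) (by positivity) hp0.le
    calc (N : ℝ) * M * (N * M) ≤ U * V * (P ^ 3 * (p : ℝ) ^ (-κ)) := by
          refine mul_le_mul ?_ (hNM.trans hk) (by positivity) (by positivity)
          gcongr
      _ = P ^ 3 * U * V * (p : ℝ) ^ (-κ) := by ring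
      _ ≤ _ := by
          gcongr
          linarith
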